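/- Let X be a real-valued random variable with unbounded distribution F and Y a nonnegative random variable with distribution G, neither degenerate at zero, and let H be the distribution of XY. Suppose (X,Y) satisfies Assumption 1 (there is a measurable function h:[0,∞)→(0,∞) such that P(X>x | Y=y) ~ h(y)P(X>x) as x→∞ uniformly in y≥0) and Assumption 2 (Ḡ(bx)=o(H̄(x)) as x→∞ for every constant b>0). If F belongs to the class S(γ) for some γ≥0, then H belongs to S(γ/β_G), where β_G=sup{y:G(y)<1}∈(0,∞] is the right endpoint of G and γ/β_G is understood as 0 when β_G=∞. -/

import Mathlib

open MeasureTheory ProbabilityTheory Filter Set Asymptotics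

noncomputable section

/-- The tail (survival) function `x ↦ P(Z > x)` of a random variable `Z`. -/
def rvTail {Ω : Type*} [MeasureSpace Ω] (Z : Ω → ℝ) (x : ℝ) : ℝ :=
  (ℙ {ω | x < Z ω}).toReal

/-- The cumulative distribution function `x ↦ P(Z ≤ x)` of a random variable `Z`. -/
def rvCdf {Ω : Type*} [MeasureSpace Ω] (Z : Ω → ℝ) (x : ℝ) : ℝ :=
  (ℙ {ω | Z ω ≤ x}).toReal

/-- The left limit of the cdf, `G(y-) = P(Z < y)`. -/
def rvCdfLeft {Ω : Type*} [MeasureSpace Ω] (Z : Ω → ℝ) (y : ℝ) : ℝ :=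
  (ℙ {ω | Z ω < y}).toReal

/-- The distribution of `Z` is unbounded (above): its tail is positive for every `x > 0`. -/
def UnboundedDist {Ω : Type*} [MeasureSpace Ω] (Z : Ω → ℝ) : Prop :=
  ∀ x > 0, 0 < rvTail Z x

/-- The support `D_Z = {y : P(Z ∈ (y - δ, y + δ)) > 0 for all δ > 0}` of the
distribution of `Z`. -/
def distSupport {Ω : Type*} [MeasureSpace Ω] (Z : Ω → ℝ) : Set ℝ :=
  {y | ∀ δ > 0, 0 < ℙ {ω | Z ω ∈ Ioo (y - δ) (y + δ)}}

/-- The distribution of `Z` belongs to the class `L(γ)`: it is unbounded above and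
`P(Z > x - t) ~ e^{γ t} P(Z > x)` as `x → ∞`, for every `t > 0`. -/
def MemLGamma {Ω : Type*} [MeasureSpace Ω] (Z : Ω → ℝ) (γ : ℝ) : Prop :=
  UnboundedDist Z ∧
    ∀ t > 0, (fun x => rvTail Z (x - t)) ~[atTop] (fun x => Real.exp (γ * t) * rvTail Z x)

/-- The tail of the two-fold convolution of the distribution of `Z` with itself. -/
def convSqTail {Ω : Type*} [MeasureSpace Ω] (Z : Ω → ℝ) (x : ℝ) : ℝ :=
  (((Measure.map Z ℙ).conv (Measure.map Z ℙ)) (Ioi x)).toReal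

/-- The distribution of `Z` belongs to the class `S(γ)`: it belongs to `L(γ)`, the
exponential moment `c = ∫ e^{γ y} dV(y)` is finite, and the tail of the two-fold
convolution satisfies `V̄*²(x) ~ 2 c V̄(x)` as `x → ∞`. -/
def MemSGamma {Ω : Type*} [MeasureSpace Ω] (Z : Ω → ℝ) (γ : ℝ) : Prop :=
  MemLGamma Z γ ∧
    Integrable (fun y => Real.exp (γ * y)) (Measure.map Z ℙ) ∧
    (fun x => convSqTail Z x) ~[atTop]
      (fun x => 2 * (∫ y, Real.exp (γ * y) ∂(Measure.map Z ℙ)) * rvTail Z x)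

open Classical in
/-- `γ / β_G`, where `β_G = sup {y : G(y) < 1}` is the right endpoint of the distribution
of `Z`, with the convention that `γ / β_G = 0` when `β_G = ∞`.
(Note that `G(y) < 1 ↔ P(Z > y) > 0`.) -/
def gammaOverBeta {Ω : Type*} [MeasureSpace Ω] (Z : Ω → ℝ) (γ : ℝ) : ℝ :=
  if BddAbove {y : ℝ | 0 < rvTail Z y} then γ / sSup {y : ℝ | 0 < rvTail Z y} else 0

/-- Assumption 2: `Ḡ(b x) = o(H̄(x))` as `x → ∞` for every constant `b > 0`, where `G` is
the distribution of `Y` and `H` is the distribution of the product `X Y`. -/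
def Assumption2 {Ω : Type*} [MeasureSpace Ω] (X Y : Ω → ℝ) : Prop :=
  ∀ b > 0, (fun x => rvTail Y (b * x)) =o[atTop] fun x => rvTail (fun ω => X ω * Y ω) x

/-- Assumption 1: `K x y` is the conditional probability `P(X > x | Y = y)`, namely for
`y` in the support of `Y` it is the limit of `P(X > x | Y ∈ (y - δ, y + δ])` as `δ → 0+`,
and for `y` outside the support it is the unconditional probability `P(X > x)` (and then
`h y = 1`); `h : [0,∞) → (0,∞)` is a measurable function such that
`P(X > x | Y = y) ~ h(y) P(X > x)` as `x → ∞`, uniformly for `y ≥ 0`. -/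
def Assumption1 {Ω : Type*} [MeasureSpace Ω] (X Y : Ω → ℝ) (h : ℝ → ℝ) (K : ℝ → ℝ → ℝ) :
    Prop :=
  Measurable h ∧ (∀ y, 0 ≤ y → 0 < h y) ∧
    (∀ y, y ∉ distSupport Y → h y = 1 ∧ ∀ x, K x y = rvTail X x) ∧
    (∀ y ∈ distSupport Y, ∀ x : ℝ,
      Tendsto
        (fun δ : ℝ => (ℙ {ω | x < X ω ∧ Y ω ∈ Ioc (y - δ) (y + δ)}).toReal /
          (ℙ {ω | Y ω ∈ Ioc (y - δ) (y + δ)}).toReal)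
        (nhdsWithin 0 (Ioi 0)) (nhds (K x y))) ∧
    ∀ ε > 0, ∀ᶠ x in atTop, ∀ y, 0 ≤ y → |K x y / (h y * rvTail X x) - 1| < ε

/-- `(X, Y)` follows a Farlie–Gumbel–Morgenstern (FGM) distribution with parameter
`θ ∈ [-1, 1]`: `P(X > x, Y > y) = F̄(x) Ḡ(y) (1 + θ F(x) G(y))` for all `x` in the
support of `X` and `y` in the support of `Y`. -/
def FGM {Ω : Type*} [MeasureSpace Ω] (X Y : Ω → ℝ) (θ : ℝ) : Prop :=
  θ ∈ Icc (-1 : ℝ) 1 ∧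
    ∀ x ∈ distSupport X, ∀ y ∈ distSupport Y,
      (ℙ {ω | x < X ω ∧ y < Y ω}).toReal =
        rvTail X x * rvTail Y y * (1 + θ * rvCdf X x * rvCdf Y y)

/-- `(X, Y)` follows a bivariate Sarmanov distribution with kernels `φ₁, φ₂` and
parameter `θ`: the joint law has density `1 + θ φ₁(x) φ₂(y)` with respect to the product
of the marginal laws, where `φ₁, φ₂` are measurable, `E φ₁(X) = E φ₂(Y) = 0` and
`1 + θ φ₁(x) φ₂(y) ≥ 0`. -/
def Sarmanov {Ω : Type*} [MeasureSpace Ω] (X Y : Ω → ℝ) (φ₁ φ₂ : ℝ → ℝ) (θ : ℝ) : Prop :=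
  Measurable φ₁ ∧ Measurable φ₂ ∧
    Integrable (fun ω => φ₁ (X ω)) ℙ ∧ Integrable (fun ω => φ₂ (Y ω)) ℙ ∧
    (∫ ω, φ₁ (X ω)) = 0 ∧ (∫ ω, φ₂ (Y ω)) = 0 ∧
    (∀ x y : ℝ, 0 ≤ y → 0 ≤ 1 + θ * φ₁ x * φ₂ y) ∧
    Measure.map (fun ω => (X ω, Y ω)) ℙ =
      ((Measure.map X ℙ).prod (Measure.map Y ℙ)).withDensity
        (fun p => ENNReal.ofReal (1 + θ * φ₁ p.1 * φ₂ p.2))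

/-- The condition `ψ(y) = lim_{δ → 0+} (∫_{y-δ}^{y+δ} φ₂(v) G(dv)) / (G(y+δ) - G(y-δ))`
for all `y` in the support of `Y`. -/
def SarmanovPsi {Ω : Type*} [MeasureSpace Ω] (Y : Ω → ℝ) (φ₂ ψ : ℝ → ℝ) : Prop :=
  ∀ y ∈ distSupport Y,
    Tendsto
      (fun δ : ℝ => (∫ v in Ioc (y - δ) (y + δ), φ₂ v ∂(Measure.map Y ℙ)) /
        (rvCdf Y (y + δ) - rvCdf Y (y - δ)))
      (nhdsWithin 0 (Ioi 0)) (nhds (ψ y))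

/-!
Within the class `L(γ)`, the class `S(γ)` is characterized by the absence of two big jumps: the
probability that a sum of two independent copies exceeds `x` while both summands exceed `A` is
negligible against the tail at `x`, once `A` is large. Unlike the convolution asymptotics, this
condition involves the tail only up to constant factors.

Disintegrating `H` over the values of `Y`, Assumption 1 shows that `H` is tail equivalent to the law
of a product of independent factors with laws `F` and `h dG`, since by Assumption 2 the values of
`Y` of order `x` do not contribute. For an independent product, the shift `x ↦ x - t` acts on
`F̄(x / y)` as the shift by `t / y`, and what matters are the `y` close to the right endpoint of `G`
when `γ > 0`, the `y` bounded away from `0` when `γ = 0`. Conditioning two independent products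
`y₁ u`, `y₂ v` on `y₁ ≤ y₂`, two big jumps are either two big jumps of `u + v` past `x / y₂`, or
force one of `y₁`, `y₂` beyond a large constant.
-/

open scoped Topology

lemma isEquivalent_iff_eventually_le_mul {ι : Type*} {l : Filter ι} {f g : ι → ℝ}
    (hf : ∀ i, 0 ≤ f i) (hg : ∀ i, 0 ≤ g i) :
    f ~[l] g ↔ ∀ c > 1, (∀ᶠ i in l, f i ≤ c * g i) ∧ ∀ᶠ i in l, g i ≤ c * f i := by
  constructor
  · have le_mul {u v : ι → ℝ} (hv : ∀ i, 0 ≤ v i) (h : u ~[l] v) (c : ℝ) (hc : 1 < c) :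
        ∀ᶠ i in l, u i ≤ c * v i := by
      filter_upwards [h.isLittleO.def (sub_pos.2 hc)] with i hi
      rw [Pi.sub_apply, Real.norm_eq_abs, Real.norm_of_nonneg (hv i)] at hi
      linarith [le_abs_self (u i - v i)]
    exact fun h c hc => ⟨le_mul hg h c hc, le_mul hf h.symm c hc⟩
  · refine fun h => isLittleO_iff.2 fun ε hε => ?_
    obtain ⟨hfg, hgf⟩ := h (1 + ε) (by linarith)
    filter_upwards [hfg, hgf] with i hfgi hgfi
    rw [Pi.sub_apply, Real.norm_eq_abs, Real.norm_of_nonneg (hg i), abs_sub_le_iff]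
    have hsq : 0 ≤ ε ^ 2 * g i := by have := hg i; positivity
    have hle : (1 + ε) * ((1 - ε) * g i) ≤ (1 + ε) * f i := by linarith
    have := le_of_mul_le_mul_left hle (by linarith)
    constructor <;> linarith

lemma isEquivalent_const_mul_iff_tendsto_div {ι : Type*} {l : Filter ι} {f g : ι → ℝ} {c : ℝ}
    (hc : c ≠ 0) (hg : ∀ i, g i ≠ 0) :
    f ~[l] (fun i => c * g i) ↔ Tendsto (fun i => f i / g i) l (𝓝 c) := by
  rw [isEquivalent_iff_tendsto_one (.of_forall fun i => mul_ne_zero hc (hg i)),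
    ← tendsto_const_smul_iff₀ hc, smul_eq_mul, mul_one]
  refine tendsto_congr fun i => ?_
  have := hg i
  simp only [Pi.div_apply, smul_eq_mul]
  field_simp

lemma frequently_nhdsGT_mem_of_dense {s : Set ℝ} (hs : Dense s) (a : ℝ) :
    ∃ᶠ x in 𝓝[>] a, x ∈ s := by
  rw [(nhdsGT_basis a).frequently_iff]
  intro b hab
  obtain ⟨x, hxs, hx⟩ := hs.exists_between hab
  exact ⟨x, hx, hxs⟩

/-- The tail `x ↦ μ (x, ∞)` of a measure on the line, as a real number; it is meant for finite
measures (`Measure.real` sends `∞` to `0`). -/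
def tail (μ : Measure ℝ) (x : ℝ) : ℝ := μ.real (Ioi x)

section Tail

variable {μ ν : Measure ℝ}

lemma tail_nonneg (μ : Measure ℝ) (x : ℝ) : 0 ≤ tail μ x := measureReal_nonneg

variable [IsFiniteMeasure μ]

lemma tail_antitone (μ : Measure ℝ) [IsFiniteMeasure μ] : Antitone (tail μ) :=
  fun _ _ h => measureReal_mono (Ioi_subset_Ioi h)

lemma tail_le_one (μ : Measure ℝ) [IsProbabilityMeasure μ] (x : ℝ) : tail μ x ≤ 1 :=
  measureReal_le_one

lemma measurable_tail (μ : Measure ℝ) [IsFiniteMeasure μ] : Measurable (tail μ) :=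
  (tail_antitone μ).measurable

lemma tail_sub_tail (μ : Measure ℝ) [IsFiniteMeasure μ] {x y : ℝ} (hxy : x ≤ y) :
    tail μ x - tail μ y = μ.real (Ioc x y) := by
  rw [tail, tail, ← measureReal_sdiff (Ioi_subset_Ioi hxy) measurableSet_Ioi, Ioi_sdiff_Ioi]

lemma tendsto_measureReal_Ioc_nhdsGT (μ : Measure ℝ) [IsFiniteMeasure μ] (x : ℝ) :
    Tendsto (fun y => μ.real (Ioc x y)) (𝓝[>] x) (𝓝 0) := by
  have hInter : ⋂ y > x, Ioc x y = ∅ := by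
    refine eq_empty_of_forall_notMem fun z hz => ?_
    simp only [mem_iInter, mem_Ioc] at hz
    obtain ⟨y, hxy, hyz⟩ := exists_between (hz (x + 1) (lt_add_one x)).1
    exact absurd (hz y hxy).2 hyz.not_ge
  have := tendsto_measure_biInter_gt (μ := μ) (s := Ioc x) (a := x)
    (fun _ _ => measurableSet_Ioc.nullMeasurableSet)
    (fun _ _ _ h => Ioc_subset_Ioc_right h) ⟨x + 1, lt_add_one x, measure_ne_top _ _⟩
  rw [hInter, measure_empty] at this
  exact (ENNReal.tendsto_toReal_zero_iff fun _ => measure_ne_top _ _).2 this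

lemma tendsto_tail_nhdsGT (μ : Measure ℝ) [IsFiniteMeasure μ] (x : ℝ) :
    Tendsto (tail μ) (𝓝[>] x) (𝓝 (tail μ x)) := by
  have : Tendsto (fun y => tail μ x - μ.real (Ioc x y)) (𝓝[>] x) (𝓝 (tail μ x - 0)) :=
    (tendsto_measureReal_Ioc_nhdsGT μ x).const_sub _
  rw [sub_zero] at this
  refine this.congr' ?_
  filter_upwards [self_mem_nhdsWithin] with y hy
  rw [← tail_sub_tail μ (le_of_lt hy), sub_sub_cancel]

lemma tendsto_tail_atTop (μ : Measure ℝ) [IsFiniteMeasure μ] :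
    Tendsto (tail μ) atTop (𝓝 0) := by
  have hInter : ⋂ x : ℝ, Ioi x = ∅ := iInter_eq_empty_iff.2 fun z => ⟨z, lt_irrefl z⟩
  have := tendsto_measure_iInter_atTop (μ := μ) (s := fun x : ℝ => Ioi x)
    (fun _ => measurableSet_Ioi.nullMeasurableSet) (fun _ _ h => Ioi_subset_Ioi h)
    ⟨0, measure_ne_top _ _⟩
  rw [hInter, measure_empty] at this
  exact (ENNReal.tendsto_toReal_zero_iff fun _ => measure_ne_top _ _).2 this

lemma exists_gt_tail_pos (μ : Measure ℝ) [IsFiniteMeasure μ] {x : ℝ} (hx : 0 < tail μ x) :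
    ∃ y > x, 0 < tail μ y := by
  obtain ⟨y, hy, hxy⟩ := (((tendsto_tail_nhdsGT μ x).eventually (lt_mem_nhds hx)).and
    self_mem_nhdsWithin).exists
  exact ⟨y, hxy, hy⟩

lemma exists_tail_le_mul_tail (μ : Measure ℝ) [IsFiniteMeasure μ] {ε : ℝ} (hε : 0 < ε) (x : ℝ) :
    ∃ y ≥ x, tail μ y ≤ ε * tail μ x := by
  rcases (tail_nonneg μ x).eq_or_lt with hx | hx
  · exact ⟨x, le_rfl, by simp [← hx]⟩
  · exact (((tendsto_tail_atTop μ).eventually (ge_mem_nhds (mul_pos hε hx))).and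
      (eventually_ge_atTop x)).exists.imp fun _ h => ⟨h.2, h.1⟩

lemma exists_measureReal_Ioc_le_mul_tail (μ : Measure ℝ) [IsFiniteMeasure μ] {ε : ℝ} (hε : 0 < ε)
    (h0 : 0 < tail μ 0) : ∃ x > 0, 0 < tail μ (2 * x) ∧ μ.real (Ioc 0 x) ≤ ε * tail μ (2 * x) := by
  have hdouble : Tendsto (fun x : ℝ => 2 * x) (𝓝[>] 0) (𝓝[>] 0) := by
    refine tendsto_nhdsWithin_iff.2 ⟨?_, ?_⟩
    · simpa using ((continuous_const_mul (2 : ℝ)).tendsto 0).mono_left nhdsWithin_le_nhds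
    · filter_upwards [self_mem_nhdsWithin] with x (hx : 0 < x) using mul_pos two_pos hx
  have htail := (tendsto_tail_nhdsGT μ 0).comp hdouble
  have hlt := (tendsto_measureReal_Ioc_nhdsGT μ 0).eventually_lt (htail.const_mul ε)
    (mul_pos hε h0)
  obtain ⟨x, ⟨hx, hpos⟩, hx0⟩ :=
    ((hlt.and (htail.eventually (lt_mem_nhds h0))).and self_mem_nhdsWithin).exists
  exact ⟨x, hx0, hpos, hx.le⟩

end Tail

/-- The class `L(γ)` for a measure on the line. Asking for all real shifts `t` rather than for
`t > 0` gives the same class, by the substitution `x ↦ x + t`. -/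
structure MemClassL (μ : Measure ℝ) (γ : ℝ) : Prop where
  tail_pos : ∀ x, 0 < tail μ x
  isEquivalent_tail_sub : ∀ t : ℝ,
    (fun x => tail μ (x - t)) ~[atTop] fun x => Real.exp (γ * t) * tail μ x

section MemClassL

variable {μ ν : Measure ℝ} {γ : ℝ}

lemma MemClassL.tendsto_tail_sub_div (h : MemClassL μ γ) (t : ℝ) :
    Tendsto (fun x => tail μ (x - t) / tail μ x) atTop (𝓝 (Real.exp (γ * t))) :=
  (isEquivalent_const_mul_iff_tendsto_div (Real.exp_ne_zero _) fun x => (h.tail_pos x).ne').1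
    (h.isEquivalent_tail_sub t)

lemma MemClassL.eventually_tail_sub_le (h : MemClassL μ γ) {t c : ℝ} (hc : Real.exp (γ * t) < c) :
    ∀ᶠ x in atTop, tail μ (x - t) ≤ c * tail μ x := by
  filter_upwards [(h.tendsto_tail_sub_div t).eventually (ge_mem_nhds hc)] with x hx
  exact (div_le_iff₀ (h.tail_pos x)).1 hx

lemma memClassL_of_eventually_le (hpos : ∀ x, 0 < tail μ x)
    (hle : ∀ t c, Real.exp (γ * t) < c → ∀ᶠ x in atTop, tail μ (x - t) ≤ c * tail μ x) :
    MemClassL μ γ := by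
  refine ⟨hpos, fun t => (isEquivalent_iff_eventually_le_mul (fun _ => tail_nonneg _ _)
    fun x => mul_nonneg (Real.exp_pos _).le (tail_nonneg _ _)).2 fun c hc => ⟨?_, ?_⟩⟩
  · simp only [← mul_assoc]
    exact hle t _ (lt_mul_of_one_lt_left (Real.exp_pos _) hc)
  · have hlt : Real.exp (γ * -t) < c * Real.exp (γ * -t) :=
      lt_mul_of_one_lt_left (Real.exp_pos _) hc
    filter_upwards [(tendsto_atTop_add_const_right atTop (-t) tendsto_id).eventually
      (hle (-t) _ hlt)] with x hx
    have hx' : tail μ x ≤ c * Real.exp (γ * -t) * tail μ (x - t) := by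
      simpa [sub_eq_add_neg] using hx
    calc Real.exp (γ * t) * tail μ x
        ≤ Real.exp (γ * t) * (c * Real.exp (γ * -t) * tail μ (x - t)) := by gcongr
      _ = Real.exp (γ * t + γ * -t) * (c * tail μ (x - t)) := by rw [Real.exp_add]; ring
      _ = c * tail μ (x - t) := by simp

lemma MemClassL.congr [IsFiniteMeasure ν] (h : MemClassL μ γ) (hνμ : tail ν ~[atTop] tail μ) :
    MemClassL ν γ where
  tail_pos x := by
    have hle := ((isEquivalent_iff_eventually_le_mul (tail_nonneg ν) (tail_nonneg μ)).1 hνμ 2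
      one_lt_two).2
    obtain ⟨y, hy, hxy⟩ := (hle.and (eventually_ge_atTop x)).exists
    have := h.tail_pos y
    have := tail_antitone ν hxy
    linarith
  isEquivalent_tail_sub t := by
    have hshift := hνμ.comp_tendsto (tendsto_atTop_add_const_right atTop (-t) tendsto_id)
    exact (hshift.trans (h.isEquivalent_tail_sub t)).trans (IsEquivalent.refl.mul hνμ.symm)

lemma MemClassL.tail_isLittleO [IsFiniteMeasure μ] (h : MemClassL μ γ) (hγ : 0 < γ)
    {u v : ℝ → ℝ} (hu : Tendsto u atTop atTop) (huv : Tendsto (fun x => v x - u x) atTop atTop) :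
    (fun x => tail μ (v x)) =o[atTop] fun x => tail μ (u x) := by
  refine isLittleO_iff.2 fun ε hε => ?_
  have hdecay : Tendsto (fun s => Real.exp (γ * -s)) atTop (𝓝 0) :=
    Real.tendsto_exp_atBot.comp (tendsto_neg_atTop_atBot.const_mul_atBot hγ)
  obtain ⟨s, hs⟩ := (hdecay.eventually (gt_mem_nhds hε)).exists
  filter_upwards [hu.eventually (h.eventually_tail_sub_le hs), huv.eventually_ge_atTop s]
    with x hx hsx
  rw [Real.norm_of_nonneg (tail_nonneg _ _), Real.norm_of_nonneg (tail_nonneg _ _)]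
  exact (tail_antitone μ (by linarith)).trans hx

end MemClassL

/-- The event that the sum of two coordinates exceeds `x` while both exceed `A`. -/
def twoBigJumps (A x : ℝ) : Set (ℝ × ℝ) := {p | x < p.1 + p.2 ∧ A < p.1 ∧ A < p.2}

/-- The condition that the sum of two independent `μ`-variables hardly ever becomes large by two
big jumps. Within `L(γ)` it characterizes `S(γ)`, and unlike the definition of `S(γ)` it involves
the tail of `μ` only up to constant factors. -/
def NoTwoBigJumps (μ : Measure ℝ) : Prop :=
  ∀ ε > 0, ∀ᶠ A in atTop, ∀ᶠ x in atTop, (μ.prod μ).real (twoBigJumps A x) ≤ ε * tail μ x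

lemma measurableSet_twoBigJumps (A x : ℝ) : MeasurableSet (twoBigJumps A x) :=
  (measurableSet_lt measurable_const (measurable_fst.add measurable_snd)).inter
    ((measurableSet_lt measurable_const measurable_fst).inter
      (measurableSet_lt measurable_const measurable_snd))

lemma twoBigJumps_anti_left {A B : ℝ} (hAB : A ≤ B) (x : ℝ) : twoBigJumps B x ⊆ twoBigJumps A x :=
  fun _ ⟨hx, h1, h2⟩ => ⟨hx, hAB.trans_lt h1, hAB.trans_lt h2⟩

lemma measureReal_prod_eq_integral {α β : Type*} [MeasurableSpace α] [MeasurableSpace β]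
    {μ : Measure α} {ν : Measure β} [IsFiniteMeasure ν] {s : Set (α × β)} (hs : MeasurableSet s) :
    (μ.prod ν).real s = ∫ a, ν.real (Prod.mk a ⁻¹' s) ∂μ := by
  simp only [Measure.real]
  rw [Measure.prod_apply hs, integral_toReal (measurable_measure_prodMk_left hs).aemeasurable
    (.of_forall fun _ => measure_lt_top _ _)]

section TwoBigJumps

variable {μ ν ρ : Measure ℝ}

lemma measureReal_section_twoBigJumps_le {A C : ℝ}
    (h : ∀ z ≥ A, tail ν z ≤ C * tail ρ z) (u x : ℝ) :
    ν.real (Prod.mk u ⁻¹' twoBigJumps A x) ≤ C * ρ.real (Prod.mk u ⁻¹' twoBigJumps A x) := by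
  by_cases hu : A < u
  · have hsection : Prod.mk u ⁻¹' twoBigJumps A x = Ioi (max A (x - u)) := by
      ext v
      simp only [twoBigJumps, mem_preimage, mem_ofPred_eq, hu, true_and, mem_Ioi, max_lt_iff,
        sub_lt_iff_lt_add']
      exact and_comm
    rw [hsection]
    exact h _ (le_max_left _ _)
  · have hsection : Prod.mk u ⁻¹' twoBigJumps A x = ∅ :=
      eq_empty_of_forall_notMem fun v hv => hu hv.2.1
    simp [hsection]

variable [IsFiniteMeasure μ] [IsFiniteMeasure ν] [IsFiniteMeasure ρ]

lemma measureReal_prod_twoBigJumps_le {A C : ℝ}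
    (h : ∀ z ≥ A, tail ν z ≤ C * tail ρ z) (x : ℝ) :
    (μ.prod ν).real (twoBigJumps A x) ≤ C * (μ.prod ρ).real (twoBigJumps A x) := by
  rw [measureReal_prod_eq_integral (measurableSet_twoBigJumps A x),
    measureReal_prod_eq_integral (measurableSet_twoBigJumps A x), ← integral_const_mul]
  exact integral_mono
    (Measure.integrable_measure_prodMk_left (measurableSet_twoBigJumps A x) (measure_ne_top _ _))
    ((Measure.integrable_measure_prodMk_left (measurableSet_twoBigJumps A x)
      (measure_ne_top _ _)).const_mul C)
    fun u => measureReal_section_twoBigJumps_le h u x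

lemma measureReal_prod_twoBigJumps_comm (A x : ℝ) :
    (μ.prod ν).real (twoBigJumps A x) = (ν.prod μ).real (twoBigJumps A x) := by
  rw [← Measure.prod_swap, map_measureReal_apply measurable_swap (measurableSet_twoBigJumps A x)]
  congr 1
  ext p
  simp only [twoBigJumps, mem_preimage, mem_ofPred_eq, Prod.fst_swap, Prod.snd_swap,
    add_comm p.2, and_comm]

lemma NoTwoBigJumps.congr (h : NoTwoBigJumps μ) (hνμ : tail ν =Θ[atTop] tail μ) :
    NoTwoBigJumps ν := by
  have eventually_le {f g : ℝ → ℝ} (hf : ∀ x, 0 ≤ f x) (hg : ∀ x, 0 ≤ g x) (h : f =O[atTop] g) :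
      ∃ C > 0, ∃ z₀, ∀ z ≥ z₀, f z ≤ C * g z := by
    obtain ⟨C, hC, hle⟩ := h.exists_pos
    refine ⟨C, hC, eventually_atTop.1 (hle.bound.mono fun x hx => ?_)⟩
    rwa [Real.norm_of_nonneg (hf x), Real.norm_of_nonneg (hg x)] at hx
  obtain ⟨C, hC, z₁, hνμ'⟩ := eventually_le (tail_nonneg ν) (tail_nonneg μ) hνμ.1
  obtain ⟨D, hD, z₂, hμν⟩ := eventually_le (tail_nonneg μ) (tail_nonneg ν) hνμ.2
  intro ε hε
  filter_upwards [h (ε / (C * C * D)) (by positivity), eventually_ge_atTop z₁] with A hA hzA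
  have hνμA : ∀ z ≥ A, tail ν z ≤ C * tail μ z := fun z hz => hνμ' z (hzA.trans hz)
  filter_upwards [hA, eventually_ge_atTop z₂] with x hx hzx
  calc (ν.prod ν).real (twoBigJumps A x)
      ≤ C * (ν.prod μ).real (twoBigJumps A x) := measureReal_prod_twoBigJumps_le hνμA x
    _ = C * (μ.prod ν).real (twoBigJumps A x) := by rw [measureReal_prod_twoBigJumps_comm]
    _ ≤ C * (C * (μ.prod μ).real (twoBigJumps A x)) := by
        gcongr; exact measureReal_prod_twoBigJumps_le hνμA x
    _ ≤ C * (C * (ε / (C * C * D) * (D * tail ν x))) := by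
        gcongr; exact hx.trans (by gcongr; exact hμν x hzx)
    _ = ε * tail ν x := by field_simp

end TwoBigJumps

/-- The event that the sum of two coordinates exceeds `x` while the first is at most `A`. -/
def firstSmall (A x : ℝ) : Set (ℝ × ℝ) := {p | x < p.1 + p.2 ∧ p.1 ≤ A}

lemma measurableSet_firstSmall (A x : ℝ) : MeasurableSet (firstSmall A x) :=
  (measurableSet_lt measurable_const (measurable_fst.add measurable_snd)).inter
    (measurableSet_le measurable_fst measurable_const)

lemma tendsto_integral_Iic_exp {μ : Measure ℝ} {γ : ℝ}
    (hint : Integrable (fun u => Real.exp (γ * u)) μ) :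
    Tendsto (fun A => ∫ u in Iic A, Real.exp (γ * u) ∂μ) atTop
      (𝓝 (∫ u, Real.exp (γ * u) ∂μ)) :=
  (aecover_Iic tendsto_id).integral_tendsto_of_countably_generated hint

section Convolution

variable {μ ν : Measure ℝ} [IsFiniteMeasure ν] {γ : ℝ}

lemma measureReal_prod_firstSmall (A x : ℝ) :
    (μ.prod ν).real (firstSmall A x) = ∫ u in Iic A, tail ν (x - u) ∂μ := by
  rw [measureReal_prod_eq_integral (measurableSet_firstSmall A x),
    ← integral_indicator measurableSet_Iic]
  congr with u
  by_cases hu : u ≤ A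
  · simp only [firstSmall, preimage_ofPred_eq, hu, and_true, mem_Iic, indicator_of_mem, tail]
    congr with v
    exact sub_lt_iff_lt_add'.symm
  · simp [firstSmall, hu]

variable [IsFiniteMeasure μ]

lemma MemClassL.tendsto_firstSmall_div (h : MemClassL ν γ) (A : ℝ) :
    Tendsto (fun x => (μ.prod ν).real (firstSmall A x) / tail ν x) atTop
      (𝓝 (∫ u in Iic A, Real.exp (γ * u) ∂μ)) := by
  simp only [measureReal_prod_firstSmall, ← integral_div]
  refine tendsto_integral_filter_of_dominated_convergence (fun _ => Real.exp (γ * A) + 1)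
    (.of_forall fun x => ?_) ?_ (integrable_const _) (.of_forall h.tendsto_tail_sub_div)
  · exact (((measurable_tail ν).comp (measurable_const.sub measurable_id)).div_const
      _).aestronglyMeasurable
  · filter_upwards [h.eventually_tail_sub_le (lt_add_one (Real.exp (γ * A)))] with x hx
    filter_upwards [ae_restrict_mem measurableSet_Iic] with u hu
    rw [Real.norm_of_nonneg (div_nonneg (tail_nonneg _ _) (tail_nonneg _ _)),
      div_le_iff₀ (h.tail_pos x)]
    exact (tail_antitone ν (sub_le_sub_left hu x)).trans hx

lemma tail_conv_self (μ : Measure ℝ) [IsFiniteMeasure μ] {A x : ℝ} (hAx : 2 * A ≤ x) :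
    tail (μ ∗ μ) x =
      2 * (μ.prod μ).real (firstSmall A x) + (μ.prod μ).real (twoBigJumps A x) := by
  have hsplit : (fun p : ℝ × ℝ => p.1 + p.2) ⁻¹' Ioi x =
      (firstSmall A x ∪ Prod.swap ⁻¹' firstSmall A x) ∪ twoBigJumps A x := by
    ext ⟨u, v⟩
    simp only [firstSmall, twoBigJumps, mem_preimage, mem_Ioi, mem_union, mem_ofPred_eq,
      Prod.swap_prod_mk, add_comm v u]
    grind
  have hdisj : Disjoint (firstSmall A x) (Prod.swap ⁻¹' firstSmall A x) :=
    Set.disjoint_left.2 fun p h1 h2 => by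
      have := h1.1; have := h1.2; have : p.2 ≤ A := h2.2; linarith
  have hdisj' : Disjoint (firstSmall A x ∪ Prod.swap ⁻¹' firstSmall A x) (twoBigJumps A x) :=
    Set.disjoint_left.2 fun p h1 h2 => h1.elim (fun h => h.2.not_gt h2.2.1)
      fun h => h.2.not_gt h2.2.2
  have hswap : (μ.prod μ).real (Prod.swap ⁻¹' firstSmall A x) =
      (μ.prod μ).real (firstSmall A x) := by
    rw [← map_measureReal_apply measurable_swap (measurableSet_firstSmall A x), Measure.prod_swap]
  rw [tail, Measure.conv, map_measureReal_apply (by fun_prop)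
    measurableSet_Ioi, hsplit, measureReal_union hdisj' (measurableSet_twoBigJumps A x),
    measureReal_union hdisj (measurable_swap (measurableSet_firstSmall A x)), hswap]
  ring

lemma firstSmall_subset_union {A B x : ℝ} (hx : A + B ≤ x) :
    firstSmall B x ⊆ firstSmall A x ∪ twoBigJumps A x := by
  rintro p ⟨hp, hpB⟩
  rcases le_or_gt p.1 A with hpA | hpA
  · exact .inl ⟨hp, hpA⟩
  · exact .inr ⟨hp, hpA, by linarith⟩

lemma NoTwoBigJumps.integrable_exp (hJ : NoTwoBigJumps μ) (hL : MemClassL μ γ) (hγ : 0 ≤ γ) :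
    Integrable (fun u => Real.exp (γ * u)) μ := by
  obtain ⟨A, hA⟩ := (hJ 1 one_pos).exists
  have hbound (B : ℝ) :
      ∫ u in Iic B, Real.exp (γ * u) ∂μ ≤ (∫ u in Iic A, Real.exp (γ * u) ∂μ) + 1 := by
    refine le_of_tendsto_of_tendsto (hL.tendsto_firstSmall_div B)
      ((hL.tendsto_firstSmall_div A).add_const 1) ?_
    filter_upwards [hA, eventually_ge_atTop (A + B)] with x hJx hx
    rw [div_add_one (hL.tail_pos x).ne', div_le_div_iff_of_pos_right (hL.tail_pos x)]
    calc (μ.prod μ).real (firstSmall B x)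
        ≤ (μ.prod μ).real (firstSmall A x ∪ twoBigJumps A x) :=
          measureReal_mono (firstSmall_subset_union hx)
      _ ≤ (μ.prod μ).real (firstSmall A x) + (μ.prod μ).real (twoBigJumps A x) :=
          measureReal_union_le _ _
      _ ≤ (μ.prod μ).real (firstSmall A x) + tail μ x := by linarith
  refine (aecover_Iic tendsto_id).integrable_of_integral_bounded_of_nonneg_ae _ (fun B => ?_)
    (.of_forall fun u => (Real.exp_pos _).le) (.of_forall hbound)
  refine Measure.integrableOn_of_bounded (M := Real.exp (γ * B)) (measure_ne_top _ _)
    (by fun_prop) ?_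
  filter_upwards [ae_restrict_mem measurableSet_Iic] with u (hu : u ≤ B)
  rw [Real.norm_of_nonneg (Real.exp_pos _).le]
  gcongr

lemma MemClassL.noTwoBigJumps_of_tendsto (hL : MemClassL μ γ)
    (hint : Integrable (fun u => Real.exp (γ * u)) μ)
    (hconv : Tendsto (fun x => tail (μ ∗ μ) x / tail μ x) atTop
      (𝓝 (2 * ∫ u, Real.exp (γ * u) ∂μ))) : NoTwoBigJumps μ := by
  intro ε hε
  have hlim : Tendsto (fun A => 2 * (∫ u, Real.exp (γ * u) ∂μ) -
      2 * ∫ u in Iic A, Real.exp (γ * u) ∂μ) atTop (𝓝 0) := by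
    simpa using ((tendsto_integral_Iic_exp hint).const_mul 2).const_sub
      (2 * ∫ u, Real.exp (γ * u) ∂μ)
  filter_upwards [hlim.eventually (gt_mem_nhds hε)] with A hA
  have hJ := hconv.sub ((hL.tendsto_firstSmall_div (μ := μ) A).const_mul 2)
  filter_upwards [hJ.eventually (ge_mem_nhds hA), eventually_ge_atTop (2 * A)] with x hx hAx
  rwa [tail_conv_self μ hAx, mul_div_assoc', ← sub_div, add_sub_cancel_left,
    div_le_iff₀ (hL.tail_pos x)] at hx

lemma NoTwoBigJumps.tendsto_tail_conv_div (hJ : NoTwoBigJumps μ) (hL : MemClassL μ γ)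
    (hγ : 0 ≤ γ) : Tendsto (fun x => tail (μ ∗ μ) x / tail μ x) atTop
      (𝓝 (2 * ∫ u, Real.exp (γ * u) ∂μ)) := by
  refine Metric.tendsto_nhds.2 fun ε hε => ?_
  have hexp := (tendsto_integral_Iic_exp (hJ.integrable_exp hL hγ)).const_mul 2
  obtain ⟨A, hA, hJA⟩ := ((Metric.tendsto_nhds.1 hexp (ε / 3) (by positivity)).and
    (hJ (ε / 3) (by positivity))).exists
  have hsmall := (hL.tendsto_firstSmall_div (μ := μ) A).const_mul 2
  filter_upwards [Metric.tendsto_nhds.1 hsmall (ε / 3) (by positivity), hJA,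
    eventually_ge_atTop (2 * A)] with x hx hJx hAx
  have hJ0 : 0 ≤ (μ.prod μ).real (twoBigJumps A x) / tail μ x :=
    div_nonneg measureReal_nonneg (tail_nonneg _ _)
  have hJ1 : (μ.prod μ).real (twoBigJumps A x) / tail μ x ≤ ε / 3 :=
    (div_le_iff₀ (hL.tail_pos x)).2 hJx
  rw [tail_conv_self μ hAx, add_div, mul_div_assoc]
  rw [Real.dist_eq, abs_lt] at hA hx ⊢
  constructor <;> linarith [hA.1, hA.2, hx.1, hx.2]

end Convolution

section RandomVariable

variable {Ω : Type*} [MeasureSpace Ω] {Z : Ω → ℝ} {γ : ℝ}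

lemma rvTail_eq_tail_map (hZ : Measurable Z) : rvTail Z = tail (Measure.map Z ℙ) := by
  ext x
  rw [tail, map_measureReal_apply hZ measurableSet_Ioi]
  rfl

variable [IsProbabilityMeasure (ℙ : Measure Ω)]

lemma memLGamma_iff_memClassL (hZ : Measurable Z) :
    MemLGamma Z γ ↔ MemClassL (Measure.map Z ℙ) γ := by
  have := Measure.isProbabilityMeasure_map (μ := (ℙ : Measure Ω)) hZ.aemeasurable
  rw [MemLGamma, UnboundedDist, rvTail_eq_tail_map hZ]
  refine ⟨fun ⟨hpos, hL⟩ => ⟨fun x => ?_, fun t => ?_⟩, fun h => ⟨fun x _ => h.tail_pos x,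
    fun t _ => h.isEquivalent_tail_sub t⟩⟩
  · exact (hpos _ (by positivity : 0 < |x| + 1)).trans_le
      (tail_antitone _ (by linarith [le_abs_self x]))
  · rcases lt_trichotomy t 0 with ht | rfl | ht
    · have hshift := (hL (-t) (neg_pos.2 ht)).comp_tendsto
        (tendsto_atTop_add_const_right atTop (-t) tendsto_id)
      have hmul := (IsEquivalent.refl (u := fun _ : ℝ => Real.exp (γ * t))).mul hshift.symm
      convert hmul using 1 <;> ext x <;>
        simp [← mul_assoc, ← Real.exp_add, sub_eq_add_neg]
    · simpa using IsEquivalent.refl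
    · exact hL t ht

lemma memSGamma_iff_noTwoBigJumps (hZ : Measurable Z) (hγ : 0 ≤ γ) :
    MemSGamma Z γ ↔ MemClassL (Measure.map Z ℙ) γ ∧ NoTwoBigJumps (Measure.map Z ℙ) := by
  have := Measure.isProbabilityMeasure_map (μ := (ℙ : Measure Ω)) hZ.aemeasurable
  rw [MemSGamma, memLGamma_iff_memClassL hZ, and_congr_right_iff]
  intro hL
  have equiv_iff (hint : Integrable (fun y => Real.exp (γ * y)) (Measure.map Z ℙ)) :=
    isEquivalent_const_mul_iff_tendsto_div (l := atTop) (f := convSqTail Z) (g := rvTail Z)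
      (mul_ne_zero two_ne_zero (integral_exp_pos hint).ne')
      fun x => by rw [rvTail_eq_tail_map hZ]; exact (hL.tail_pos x).ne'
  rw [rvTail_eq_tail_map hZ] at equiv_iff ⊢
  exact ⟨fun ⟨hint, hconv⟩ => hL.noTwoBigJumps_of_tendsto hint ((equiv_iff hint).1 hconv),
    fun hJ => ⟨hJ.integrable_exp hL hγ, (equiv_iff (hJ.integrable_exp hL hγ)).2
      (hJ.tendsto_tail_conv_div hL hγ)⟩⟩

end RandomVariable

/-- The law of `Y * X` when `Y` has law `G` and `κ y` is the conditional law of `X` given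
`Y = y`. -/
def mulLaw (G : Measure ℝ) (κ : Kernel ℝ ℝ) : Measure ℝ := (G ⊗ₘ κ).map fun p => p.1 * p.2

/-- Assumption 2 for measures: `Ḡ(b x) = o(H̄(x))` as `x → ∞` for every `b > 0`. -/
def ScaledTailNegligible (G H : Measure ℝ) : Prop :=
  ∀ b > 0, (fun x => tail G (b * x)) =o[atTop] tail H

/-- `q` is the reciprocal `1 / β` of the right endpoint `β ∈ (0, ∞]` of `G`, with `1 / ∞ = 0`.
Working with `1 / β` avoids a case distinction between bounded and unbounded `G`. -/
def IsInvRightEndpoint (G : Measure ℝ) (q : ℝ) : Prop :=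
  IsGLB {r | 0 < r ∧ 0 < tail G r⁻¹} q

section Product

variable {F G H : Measure ℝ} {κ : Kernel ℝ ℝ}

lemma mconv_eq_mulLaw_const [SFinite F] [SFinite G] : G ∗ₘ F = mulLaw G (.const ℝ F) := by
  rw [mulLaw, Measure.compProd_const, Measure.mconv]

lemma measurable_tail_kernel_div [IsFiniteKernel κ] (x : ℝ) :
    Measurable fun y => tail (κ y) (x / y) :=
  (Kernel.measurable_kernel_prodMk_left (measurableSet_lt
    (measurable_const.div measurable_fst) measurable_snd)).ennreal_toReal

lemma integrable_tail_kernel_div [IsFiniteMeasure G] [IsMarkovKernel κ] (x : ℝ) :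
    Integrable (fun y => tail (κ y) (x / y)) G :=
  .of_bound (measurable_tail_kernel_div x).aestronglyMeasurable 1 (.of_forall fun y => by
    rw [Real.norm_of_nonneg (tail_nonneg _ _)]; exact tail_le_one _ _)

lemma integrable_tail_div [IsFiniteMeasure G] [IsProbabilityMeasure F] (x : ℝ) :
    Integrable (fun y => tail F (x / y)) G :=
  integrable_tail_kernel_div (κ := .const ℝ F) x

lemma tail_mulLaw [IsFiniteMeasure G] [IsMarkovKernel κ] (hG : ∀ᵐ y ∂G, 0 ≤ y) {x : ℝ}
    (hx : 0 ≤ x) : tail (mulLaw G κ) x = ∫ y in Ioi 0, tail (κ y) (x / y) ∂G := by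
  have hs : MeasurableSet ((fun p : ℝ × ℝ => p.1 * p.2) ⁻¹' Ioi x) :=
    measurable_fst.mul measurable_snd measurableSet_Ioi
  have hsection : ∀ᵐ y ∂G, (κ y).real (Prod.mk y ⁻¹' ((fun p : ℝ × ℝ => p.1 * p.2) ⁻¹' Ioi x)) =
      (Ioi 0).indicator (fun y => tail (κ y) (x / y)) y := by
    filter_upwards [hG] with y hy
    rcases hy.eq_or_lt with rfl | hy
    · simp [← preimage_comp, Function.comp_def, hx.not_gt]
    · rw [indicator_of_mem (mem_Ioi.2 hy), tail]
      congr 1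
      ext u
      exact (div_lt_iff₀' hy).symm
  rw [tail, mulLaw, map_measureReal_apply (by fun_prop) measurableSet_Ioi, measureReal_def,
    Measure.compProd_apply hs, ← integral_indicator measurableSet_Ioi,
    ← integral_congr_ae hsection]
  exact (integral_toReal (Kernel.measurable_kernel_prodMk_left hs).aemeasurable
    (.of_forall fun _ => measure_lt_top _ _)).symm

lemma tail_mconv [IsFiniteMeasure G] [IsProbabilityMeasure F] (hG : ∀ᵐ y ∂G, 0 ≤ y) {x : ℝ}
    (hx : 0 ≤ x) : tail (G ∗ₘ F) x = ∫ y in Ioi 0, tail F (x / y) ∂G := by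
  rw [mconv_eq_mulLaw_const, tail_mulLaw hG hx]
  rfl

lemma tail_mul_tail_le_tail_mconv [IsFiniteMeasure F] [IsFiniteMeasure G] {m x : ℝ} (hm : 0 < m)
    (hx : 0 ≤ x) : tail G m * tail F (x / m) ≤ tail (G ∗ₘ F) x := by
  rw [tail, tail, ← measureReal_prod_prod, tail, Measure.mconv,
    map_measureReal_apply (by fun_prop) measurableSet_Ioi]
  refine measureReal_mono fun p ⟨h1, h2⟩ => ?_
  calc x = m * (x / m) := by field_simp
    _ < p.1 * p.2 := mul_lt_mul'' h1 h2 hm.le (by positivity)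

section ScaledTailNegligible

variable [IsFiniteMeasure G]

lemma setIntegral_le_add_mul_tail {f g : ℝ → ℝ} {m d k : ℝ} (hf : IntegrableOn f (Ioi m) G)
    (hg : IntegrableOn g (Ioi m) G) (hg0 : ∀ᵐ y ∂G, 0 ≤ g y) (hk : 0 ≤ k)
    (hfk : ∀ᵐ y ∂G, f y ≤ k) (hfg : ∀ᵐ y ∂G, m < y → y ≤ d → f y ≤ g y) :
    ∫ y in Ioi m, f y ∂G ≤ (∫ y in Ioi m, g y ∂G) + k * tail G d := by
  have hind : Integrable ((Ioi d).indicator fun _ => k) G :=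
    (integrable_const k).indicator measurableSet_Ioi
  calc ∫ y in Ioi m, f y ∂G
      ≤ ∫ y in Ioi m, (g y + (Ioi d).indicator (fun _ => k) y) ∂G := by
        refine setIntegral_mono_on_ae hf (hg.add hind.integrableOn) measurableSet_Ioi ?_
        filter_upwards [hg0, hfk, hfg] with y hgy hfky hfgy hmy
        by_cases hyd : y ≤ d
        · rw [indicator_of_notMem (notMem_Ioi.2 hyd), add_zero]
          exact hfgy hmy hyd
        · rw [indicator_of_mem (mem_Ioi.2 (lt_of_not_ge hyd))]
          linarith
    _ = (∫ y in Ioi m, g y ∂G) + ∫ y in Ioi m, (Ioi d).indicator (fun _ => k) y ∂G :=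
        integral_add hg hind.integrableOn
    _ ≤ (∫ y in Ioi m, g y ∂G) + ∫ y, (Ioi d).indicator (fun _ => k) y ∂G := by
        grw [setIntegral_le_integral hind
          (.of_forall fun _ => indicator_nonneg (fun _ _ => hk) _)]
    _ = (∫ y in Ioi m, g y ∂G) + k * tail G d := by
        rw [integral_indicator_const _ measurableSet_Ioi, smul_eq_mul, mul_comm, tail]

lemma ScaledTailNegligible.eventually_setIntegral_le_add (hneg : ScaledTailNegligible G H)
    {f g : ℝ → ℝ → ℝ} {m z₀ k δ : ℝ} (hm : 0 ≤ m) (hz₀ : 0 < z₀) (hk : 0 ≤ k) (hδ : 0 < δ)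
    (hf : ∀ x, IntegrableOn (f x) (Ioi m) G) (hg : ∀ x, IntegrableOn (g x) (Ioi m) G)
    (hg0 : ∀ x, ∀ᵐ y ∂G, 0 ≤ g x y) (hfk : ∀ x, ∀ᵐ y ∂G, f x y ≤ k)
    (hfg : ∀ᵐ y ∂G, m < y → ∀ x, z₀ ≤ x / y → f x y ≤ g x y) :
    ∀ᶠ x in atTop, ∫ y in Ioi m, f x y ∂G ≤ (∫ y in Ioi m, g x y ∂G) + δ * tail H x := by
  filter_upwards [((hneg z₀⁻¹ (inv_pos.2 hz₀)).const_mul_left k).def hδ] with x hx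
  rw [Real.norm_of_nonneg (mul_nonneg hk (tail_nonneg _ _)),
    Real.norm_of_nonneg (tail_nonneg _ _)] at hx
  refine (setIntegral_le_add_mul_tail (d := z₀⁻¹ * x) (hf x) (hg x) (hg0 x) hk (hfk x) ?_).trans
    (by linarith)
  filter_upwards [hfg] with y hy hmy hyd
  refine hy hmy x ?_
  rw [le_div_iff₀ (hm.trans_lt hmy)]
  exact (le_inv_mul_iff₀ hz₀).1 hyd

end ScaledTailNegligible

section IsInvRightEndpoint

variable {q r : ℝ}

lemma IsInvRightEndpoint.nonneg (hq : IsInvRightEndpoint G q) : 0 ≤ q :=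
  hq.2 fun _ hr => hr.1.le

lemma IsInvRightEndpoint.pos_of_lt (hq : IsInvRightEndpoint G q) (hqr : q < r) : 0 < r :=
  hq.nonneg.trans_lt hqr

variable [IsFiniteMeasure G]

lemma IsInvRightEndpoint.tail_inv_pos_of_lt (hq : IsInvRightEndpoint G q) (hqr : q < r) :
    0 < tail G r⁻¹ := by
  obtain ⟨s, ⟨hs, hGs⟩, hsr⟩ := (isGLB_lt_iff hq).1 hqr
  exact hGs.trans_le (tail_antitone G (inv_anti₀ hs hsr.le))

lemma IsInvRightEndpoint.ae_mul_le_one (hq : IsInvRightEndpoint G q) : ∀ᵐ y ∂G, q * y ≤ 1 := by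
  rcases hq.nonneg.eq_or_lt with rfl | hq0
  · simp
  have htail : tail G q⁻¹ = 0 := by
    by_contra hne
    obtain ⟨y, hy, hGy⟩ := exists_gt_tail_pos G ((tail_nonneg G _).lt_of_ne' hne)
    have hy0 : 0 < y := (inv_pos.2 hq0).trans hy
    exact (hq.1 ⟨inv_pos.2 hy0, by rwa [inv_inv]⟩).not_gt (inv_lt_of_inv_lt₀ hq0 hy)
  rw [tail, measureReal_eq_zero_iff] at htail
  filter_upwards [measure_eq_zero_iff_ae_notMem.1 htail] with y hy
  exact (le_inv_mul_iff₀ hq0).1 (by simpa using hy)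

end IsInvRightEndpoint

end Product

section ProductMemClassL

variable {F G : Measure ℝ} [IsProbabilityMeasure F] [IsFiniteMeasure G] {γ q : ℝ}

lemma MemClassL.tail_mconv_pos (hF : MemClassL F γ) {m : ℝ} (hm : 0 < m) (hGm : 0 < tail G m)
    (x : ℝ) : 0 < tail (G ∗ₘ F) x :=
  calc 0 < tail G m * tail F (|x| / m) := mul_pos hGm (hF.tail_pos _)
    _ ≤ tail (G ∗ₘ F) |x| := tail_mul_tail_le_tail_mconv hm (abs_nonneg x)
    _ ≤ tail (G ∗ₘ F) x := tail_antitone _ (le_abs_self x)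

lemma MemClassL.eventually_setIntegral_tail_sub_le (hF : MemClassL F γ)
    (hG : ∀ᵐ y ∂G, 0 ≤ y) (hneg : ScaledTailNegligible G (G ∗ₘ F)) {m s t c : ℝ} (hm : 0 ≤ m)
    (hst : ∀ᵐ y ∂G, m < y → t ≤ s * y) (hc : Real.exp (γ * s) < c) :
    ∀ᶠ x in atTop, ∫ y in Ioi m, tail F ((x - t) / y) ∂G ≤ c * tail (G ∗ₘ F) x := by
  obtain ⟨c', hc', hcc'⟩ := exists_between hc
  obtain ⟨z₀, hz₀⟩ := eventually_atTop.1 (hF.eventually_tail_sub_le hc')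
  have hc'0 : 0 < c' := (Real.exp_pos _).trans hc'
  have hle : ∀ᵐ y ∂G, m < y → ∀ x, max z₀ 1 ≤ x / y →
      tail F ((x - t) / y) ≤ c' * tail F (x / y) := by
    filter_upwards [hst] with y hy hmy x hxy
    have hshift : x / y - s ≤ (x - t) / y := by
      rw [sub_div]
      exact sub_le_sub_left ((div_le_iff₀ (hm.trans_lt hmy)).2 (hy hmy)) _
    exact (tail_antitone F hshift).trans (hz₀ _ ((le_max_left _ _).trans hxy))
  filter_upwards [eventually_ge_atTop 0, hneg.eventually_setIntegral_le_add hm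
    (by positivity : (0 : ℝ) < max z₀ 1) zero_le_one (sub_pos.2 hcc')
    (fun x => (integrable_tail_div (x - t)).integrableOn)
    (fun x => ((integrable_tail_div x).const_mul c').integrableOn)
    (fun x => .of_forall fun y => mul_nonneg hc'0.le (tail_nonneg _ _))
    (fun x => .of_forall fun y => tail_le_one _ _) hle] with x hx0 hx
  calc ∫ y in Ioi m, tail F ((x - t) / y) ∂G
      ≤ c' * (∫ y in Ioi m, tail F (x / y) ∂G) + (c - c') * tail (G ∗ₘ F) x := by
        rwa [← integral_const_mul]
    _ ≤ c' * (∫ y in Ioi 0, tail F (x / y) ∂G) + (c - c') * tail (G ∗ₘ F) x := by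
        grw [setIntegral_mono_set (integrable_tail_div x).integrableOn
          (.of_forall fun y => tail_nonneg _ _) (Ioi_subset_Ioi hm).eventuallyLE]
    _ = c * tail (G ∗ₘ F) x := by rw [← tail_mconv hG hx0]; ring

lemma setIntegral_Ioc_tail_div_le {m x : ℝ} (hx : 0 ≤ x) :
    ∫ y in Ioc 0 m, tail F (x / y) ∂G ≤ G.real (Ioc 0 m) * tail F (x / m) :=
  calc ∫ y in Ioc 0 m, tail F (x / y) ∂G
      ≤ ∫ _ in Ioc 0 m, tail F (x / m) ∂G :=
        setIntegral_mono_on (integrable_tail_div x).integrableOn (integrable_const _)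
          measurableSet_Ioc fun y hy =>
            tail_antitone F (div_le_div_of_nonneg_left hx hy.1 hy.2)
    _ = G.real (Ioc 0 m) * tail F (x / m) := by rw [setIntegral_const, smul_eq_mul]

lemma exists_eventually_setIntegral_Ioc_tail_sub_le (hG0 : 0 < tail G 0) (t : ℝ) {δ : ℝ}
    (hδ : 0 < δ) : ∃ m > 0, ∀ᶠ x in atTop,
      ∫ y in Ioc 0 m, tail F ((x - t) / y) ∂G ≤ δ * tail (G ∗ₘ F) x := by
  obtain ⟨m, hm, -, hGm⟩ := exists_measureReal_Ioc_le_mul_tail G hδ hG0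
  refine ⟨m, hm, ?_⟩
  filter_upwards [eventually_ge_atTop 0, eventually_ge_atTop t, eventually_ge_atTop (2 * t)]
    with x hx0 hxt hx2t
  have hdiv : x / (2 * m) ≤ (x - t) / m := by
    rw [div_le_div_iff₀ (by positivity) hm]
    nlinarith
  calc ∫ y in Ioc 0 m, tail F ((x - t) / y) ∂G
      ≤ G.real (Ioc 0 m) * tail F ((x - t) / m) := setIntegral_Ioc_tail_div_le (sub_nonneg.2 hxt)
    _ ≤ δ * tail G (2 * m) * tail F (x / (2 * m)) := by
        gcongr
        exacts [tail_nonneg _ _, mul_nonneg hδ.le (tail_nonneg _ _), tail_antitone F hdiv]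
    _ ≤ δ * tail (G ∗ₘ F) x := by
        rw [mul_assoc]
        gcongr
        exact tail_mul_tail_le_tail_mconv (by positivity) hx0

lemma MemClassL.eventually_setIntegral_Ioc_tail_sub_le (hF : MemClassL F γ) (hγ : 0 < γ)
    {m m' : ℝ} (hm : 0 < m) (hmm' : m < m') (hGm' : 0 < tail G m') (t : ℝ) {δ : ℝ} (hδ : 0 < δ) :
    ∀ᶠ x in atTop, ∫ y in Ioc 0 m, tail F ((x - t) / y) ∂G ≤ δ * tail (G ∗ₘ F) x := by
  have hm' : 0 < m' := hm.trans hmm'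
  have hgap : Tendsto (fun x => (x - t) / m - x / m') atTop atTop := by
    have hlin : Tendsto (fun x => (m⁻¹ - m'⁻¹) * x + -(t / m)) atTop atTop :=
      tendsto_atTop_add_const_right _ _
        (tendsto_id.const_mul_atTop (sub_pos.2 (inv_strictAnti₀ hm hmm')))
    exact hlin.congr fun x => by ring
  have hlittle := (hF.tail_isLittleO hγ (tendsto_id.atTop_div_const hm') hgap).const_mul_left
    (G.real (Ioc 0 m))
  filter_upwards [eventually_ge_atTop 0, eventually_ge_atTop t,
    hlittle.def (mul_pos hδ hGm')] with x hx0 hxt hx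
  rw [Real.norm_of_nonneg (mul_nonneg measureReal_nonneg (tail_nonneg _ _)),
    Real.norm_of_nonneg (tail_nonneg _ _)] at hx
  calc ∫ y in Ioc 0 m, tail F ((x - t) / y) ∂G
      ≤ G.real (Ioc 0 m) * tail F ((x - t) / m) := setIntegral_Ioc_tail_div_le (sub_nonneg.2 hxt)
    _ ≤ δ * (tail G m' * tail F (x / m')) := by rw [← mul_assoc]; exact hx
    _ ≤ δ * tail (G ∗ₘ F) x := by
        gcongr
        exact tail_mul_tail_le_tail_mconv hm' hx0

lemma MemClassL.exists_cutoff (hF : MemClassL F γ) (hγ : 0 ≤ γ) (hq : IsInvRightEndpoint G q)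
    {t c δ : ℝ} (hc : Real.exp (γ * q * t) < c) (hδ : 0 < δ) :
    ∃ m > 0, Real.exp (γ * (m⁻¹ * t)) < c ∧ ∀ᶠ x in atTop,
      ∫ y in Ioc 0 m, tail F ((x - t) / y) ∂G ≤ δ * tail (G ∗ₘ F) x := by
  -- For `γ = 0` the mass of `G` on `(0, m]` is made small; for `γ > 0` the tail of `F` decays
  -- exponentially, and `m` can be taken close to the right endpoint `1 / q`.
  rcases hγ.eq_or_lt with rfl | hγ
  · have hr := lt_add_one q
    have hG0 : 0 < tail G 0 := (hq.tail_inv_pos_of_lt hr).trans_le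
      (tail_antitone G (inv_pos.2 (hq.pos_of_lt hr)).le)
    obtain ⟨m, hm, hsmall⟩ := exists_eventually_setIntegral_Ioc_tail_sub_le (F := F) hG0 t hδ
    exact ⟨m, hm, by simpa using hc, hsmall⟩
  · have hcont : Tendsto (fun r => Real.exp (γ * (r * t))) (𝓝[>] q) (𝓝 (Real.exp (γ * q * t))) := by
      rw [mul_assoc]
      exact Continuous.continuousWithinAt (by fun_prop)
    obtain ⟨r, hrc, hqr⟩ := ((hcont.eventually (gt_mem_nhds hc)).and self_mem_nhdsWithin).exists
    obtain ⟨r', hqr', hr'r⟩ := exists_between hqr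
    have hr' := hq.pos_of_lt hqr'
    exact ⟨r⁻¹, inv_pos.2 (hq.pos_of_lt hqr), by rwa [inv_inv],
      hF.eventually_setIntegral_Ioc_tail_sub_le hγ (inv_pos.2 (hq.pos_of_lt hqr))
        (inv_strictAnti₀ hr' hr'r) (hq.tail_inv_pos_of_lt hqr') t hδ⟩

theorem MemClassL.mconv (hF : MemClassL F γ) (hγ : 0 ≤ γ) (hq : IsInvRightEndpoint G q)
    (hG : ∀ᵐ y ∂G, 0 ≤ y) (hneg : ScaledTailNegligible G (G ∗ₘ F)) :
    MemClassL (G ∗ₘ F) (γ * q) := by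
  have hr := lt_add_one q
  refine memClassL_of_eventually_le (hF.tail_mconv_pos (inv_pos.2 (hq.pos_of_lt hr))
    (hq.tail_inv_pos_of_lt hr)) fun t c hc => ?_
  rcases le_or_gt t 0 with ht | ht
  · have hst : ∀ᵐ y ∂G, 0 < y → t ≤ q * t * y := by
      filter_upwards [hq.ae_mul_le_one] with y hy _
      nlinarith
    rw [mul_assoc] at hc
    filter_upwards [hF.eventually_setIntegral_tail_sub_le hG hneg le_rfl hst hc,
      eventually_ge_atTop 0] with x hx hx0
    rwa [tail_mconv hG (by linarith)]
  · obtain ⟨c', hc', hcc'⟩ := exists_between hc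
    obtain ⟨m, hm, hmc', hsmall⟩ := hF.exists_cutoff hγ hq hc' (sub_pos.2 hcc')
    have hst : ∀ y, m < y → t ≤ m⁻¹ * t * y := fun y hy =>
      calc t = m⁻¹ * t * m := by field_simp
        _ ≤ m⁻¹ * t * y := by gcongr
    filter_upwards [hsmall, eventually_ge_atTop t,
      hF.eventually_setIntegral_tail_sub_le hG hneg hm.le (.of_forall hst) hmc'] with x hx hxt hx'
    rw [tail_mconv hG (by linarith), ← Ioc_union_Ioi_eq_Ioi hm.le,
      setIntegral_union Ioc_disjoint_Ioi_same measurableSet_Ioi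
        (integrable_tail_div _).integrableOn (integrable_tail_div _).integrableOn]
    linarith

end ProductMemClassL

section ProductNoTwoBigJumps

section MonoidProduct

variable {M N : Type*} [Monoid M] [MeasurableSpace M] [MeasurableMul₂ M] [Monoid N]
  [MeasurableSpace N] [MeasurableMul₂ N]

lemma mconv_apply (μ ν : Measure M) [SFinite ν] {s : Set M} (hs : MeasurableSet s) :
    (μ ∗ₘ ν) s = ∫⁻ y, ν ((y * ·) ⁻¹' s) ∂μ := by
  rw [Measure.mconv, Measure.map_apply measurable_mul hs, Measure.prod_apply (measurable_mul hs)]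
  rfl

lemma measurable_measure_preimage_mul (ν : Measure M) [SFinite ν] {s : Set M}
    (hs : MeasurableSet s) : Measurable fun y => ν ((y * ·) ⁻¹' s) :=
  measurable_measure_prodMk_left (measurable_mul hs)

instance measurableMul₂_prod : MeasurableMul₂ (M × N) :=
  ⟨((measurable_fst.comp measurable_fst).mul (measurable_fst.comp measurable_snd)).prodMk
    ((measurable_snd.comp measurable_fst).mul (measurable_snd.comp measurable_snd))⟩

lemma mconv_prod_mconv (μ₁ μ₂ : Measure M) (ν₁ ν₂ : Measure N) [IsFiniteMeasure μ₁]
    [IsFiniteMeasure μ₂] [IsFiniteMeasure ν₁] [IsFiniteMeasure ν₂] :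
    (μ₁ ∗ₘ μ₂).prod (ν₁ ∗ₘ ν₂) = (μ₁.prod ν₁) ∗ₘ (μ₂.prod ν₂) := by
  refine Measure.prod_eq fun s t hs ht => ?_
  rw [mconv_apply _ _ (hs.prod ht), mconv_apply _ _ hs, mconv_apply _ _ ht,
    ← lintegral_prod_mul (measurable_measure_preimage_mul _ hs).aemeasurable
      (measurable_measure_preimage_mul _ ht).aemeasurable]
  exact lintegral_congr fun p => Measure.prod_prod ((p.1 * ·) ⁻¹' s) ((p.2 * ·) ⁻¹' t)

end MonoidProduct

variable {F G : Measure ℝ}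

lemma integral_prod_le_two_mul_of_symm [IsFiniteMeasure G] {f g : ℝ × ℝ → ℝ}
    (hf : Integrable f (G.prod G)) (hg : Integrable g (G.prod G)) (hg0 : ∀ p, 0 ≤ g p)
    (hsymm : ∀ p, f p.swap = f p) (hfg : ∀ᵐ p ∂G.prod G, p.1 ≤ p.2 → f p ≤ g p) :
    ∫ p, f p ∂G.prod G ≤ 2 * ∫ p, g p ∂G.prod G := by
  have hle : ∀ᵐ p ∂G.prod G, f p ≤ g p + g p.swap := by
    filter_upwards [hfg, Measure.measurePreserving_swap.quasiMeasurePreserving.ae hfg]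
      with p hp hp'
    rcases le_total p.1 p.2 with h | h
    · linarith [hp h, hg0 p.swap]
    · linarith [hp' h, hg0 p, hsymm p]
  calc ∫ p, f p ∂G.prod G
      ≤ ∫ p, (g p + g p.swap) ∂G.prod G := integral_mono_ae hf (hg.add hg.swap) hle
    _ = (∫ p, g p ∂G.prod G) + ∫ p, g p.swap ∂G.prod G := integral_add hg hg.swap
    _ = 2 * ∫ p, g p ∂G.prod G := by rw [integral_prod_swap, two_mul]

lemma preimage_mul_twoBigJumps_subset {p : ℝ × ℝ} {a b B x : ℝ} (hb : 0 < b) (hba : b ≤ a)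
    (hB : 0 < B) (h1 : 0 ≤ p.1) (h12 : p.1 ≤ p.2) (h2x : 2 * B * p.2 ≤ x) :
    (p * ·) ⁻¹' twoBigJumps (a * B) x ⊆ twoBigJumps B (x / p.2) ∪
      ({w | b < p.1 ∧ (x / p.2 - B < w.1 ∨ x / p.2 - B < w.2)} ∪
        {w | a < p.2 ∧ x / (2 * b) < w.1}) := by
  -- If one coordinate of `w` is at most `B`, the other one exceeds `x / p.2 - B`; when moreover
  -- `p.1 ≤ b`, the term `p.1 * w.1` alone exceeds `x / 2`.
  obtain ⟨y, z⟩ := p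
  rintro ⟨u, v⟩ ⟨hx, hu, hv⟩
  simp only [Prod.mk_mul_mk] at h1 h12 h2x hx hu hv
  have haB : 0 < a * B := mul_pos (hb.trans_le hba) hB
  have hy : 0 < y := h1.lt_of_ne fun h => by subst h; linarith
  have hz : 0 < z := hy.trans_le h12
  have hu0 : 0 < u := pos_of_mul_pos_right (haB.trans hu) hy.le
  have hsum : x / z < u + v := by
    rw [div_lt_iff₀ hz]
    nlinarith
  have hBu (h : y ≤ a) : B < u := lt_of_mul_lt_mul_left (by nlinarith) hy.le
  simp only [twoBigJumps, mem_union, mem_ofPred_eq]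
  rcases le_or_gt v B with hvB | hvB
  · have hza : a < z := lt_of_not_ge fun h => by nlinarith
    rcases le_or_gt y b with hyb | hyb
    · refine .inr (.inr ⟨hza, ?_⟩)
      rw [div_lt_iff₀ (by positivity)]
      nlinarith
    · exact .inr (.inl ⟨hyb, .inl (by linarith)⟩)
  · rcases le_or_gt u B with huB | huB
    · exact .inr (.inl ⟨hba.trans_lt (lt_of_not_ge fun h => (hBu h).not_ge huB),
        .inr (by linarith)⟩)
    · exact .inl ⟨hsum, huB, hvB⟩

lemma measureReal_preimage_mul_twoBigJumps_le [IsProbabilityMeasure F] {p : ℝ × ℝ}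
    {a b B C η x : ℝ} (hb : 0 < b) (hba : b ≤ a) (hB : 0 < B) (h1 : 0 ≤ p.1) (h12 : p.1 ≤ p.2)
    (h2x : 2 * B * p.2 ≤ x)
    (hη : (F.prod F).real (twoBigJumps B (x / p.2)) ≤ η * tail F (x / p.2))
    (hC : tail F (x / p.2 - B) ≤ C * tail F (x / p.2)) :
    (F.prod F).real ((p * ·) ⁻¹' twoBigJumps (a * B) x) ≤
      (η + (Ioi b).indicator (fun _ => 2 * C) p.1) * tail F (x / p.2) +
        (Ioi a).indicator (fun _ => tail F (x / (2 * b))) p.2 := by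
  have hone : (F.prod F).real {w | b < p.1 ∧ (x / p.2 - B < w.1 ∨ x / p.2 - B < w.2)} ≤
      (Ioi b).indicator (fun _ => 2 * C) p.1 * tail F (x / p.2) := by
    by_cases hp : b < p.1
    · have hunion : {w : ℝ × ℝ | b < p.1 ∧ (x / p.2 - B < w.1 ∨ x / p.2 - B < w.2)} =
          Ioi (x / p.2 - B) ×ˢ univ ∪ univ ×ˢ Ioi (x / p.2 - B) := by ext w; simp [hp]
      rw [hunion, indicator_of_mem (mem_Ioi.2 hp)]
      refine (measureReal_union_le _ _).trans ?_
      rw [measureReal_prod_prod, measureReal_prod_prod, probReal_univ, one_mul, mul_one]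
      change tail F (x / p.2 - B) + tail F (x / p.2 - B) ≤ _
      linarith
    · simp [hp]
  have hlarge : (F.prod F).real {w | a < p.2 ∧ x / (2 * b) < w.1} ≤
      (Ioi a).indicator (fun _ => tail F (x / (2 * b))) p.2 := by
    by_cases hp : a < p.2
    · have hprod : {w : ℝ × ℝ | a < p.2 ∧ x / (2 * b) < w.1} = Ioi (x / (2 * b)) ×ˢ univ := by
        ext w; simp [hp]
      rw [hprod, measureReal_prod_prod, probReal_univ, mul_one, indicator_of_mem (mem_Ioi.2 hp),
        tail]
    · simp [hp]
  calc (F.prod F).real ((p * ·) ⁻¹' twoBigJumps (a * B) x)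
      ≤ (F.prod F).real (twoBigJumps B (x / p.2)) +
          ((F.prod F).real {w | b < p.1 ∧ (x / p.2 - B < w.1 ∨ x / p.2 - B < w.2)} +
            (F.prod F).real {w | a < p.2 ∧ x / (2 * b) < w.1}) := by
        grw [← measureReal_union_le, ← measureReal_union_le]
        exact measureReal_mono (preimage_mul_twoBigJumps_subset hb hba hB h1 h12 h2x)
    _ ≤ _ := by linarith

lemma measureReal_preimage_swap_mul_twoBigJumps [SFinite F] (A x : ℝ) (p : ℝ × ℝ) :
    (F.prod F).real ((p.swap * ·) ⁻¹' twoBigJumps A x) =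
      (F.prod F).real ((p * ·) ⁻¹' twoBigJumps A x) := by
  conv_lhs => rw [← Measure.prod_swap]
  rw [map_measureReal_apply measurable_swap
    (measurable_const_mul p.swap (measurableSet_twoBigJumps A x))]
  congr 1
  ext w
  simp only [twoBigJumps, mem_preimage, mem_ofPred_eq, Prod.fst_mul, Prod.snd_mul, Prod.fst_swap,
    Prod.snd_swap, add_comm (p.2 * w.2), and_comm]

lemma measureReal_mconv_prod_mconv [IsFiniteMeasure F] [IsFiniteMeasure G] {s : Set (ℝ × ℝ)}
    (hs : MeasurableSet s) :
    ((G ∗ₘ F).prod (G ∗ₘ F)).real s =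
      ∫ p, (F.prod F).real ((p * ·) ⁻¹' s) ∂G.prod G := by
  rw [mconv_prod_mconv, measureReal_def, mconv_apply _ _ hs]
  exact (integral_toReal (measurable_measure_preimage_mul _ hs).aemeasurable
    (.of_forall fun _ => measure_lt_top _ _)).symm

lemma preimage_mul_twoBigJumps_eq_empty {p : ℝ × ℝ} {A x : ℝ} (hA : 0 ≤ A) (hp : p.2 = 0) :
    (p * ·) ⁻¹' twoBigJumps A x = ∅ :=
  eq_empty_of_forall_notMem fun w hw => by
    have h := hw.2.2
    rw [Prod.snd_mul, hp, zero_mul] at h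
    exact h.not_ge hA

lemma measureReal_preimage_mul_twoBigJumps_le_of_eventually [IsProbabilityMeasure F] {p : ℝ × ℝ}
    {a b B C η x z : ℝ} (hb : 0 < b) (hba : b ≤ a) (hB : 0 < B) (hC : 0 ≤ C) (hη : 0 ≤ η)
    (hz : 2 * B ≤ z) (hJ : ∀ w ≥ z, (F.prod F).real (twoBigJumps B w) ≤ η * tail F w)
    (hshift : ∀ w ≥ z, tail F (w - B) ≤ C * tail F w) (h1 : 0 ≤ p.1) (h12 : p.1 ≤ p.2) :
    (F.prod F).real ((p * ·) ⁻¹' twoBigJumps (a * B) x) ≤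
      (η + (Ioi b).indicator (fun _ => 2 * C) p.1) *
          (Ioi 0).indicator (fun y => tail F (x / y)) p.2 +
        ((Ioi a).indicator (fun _ => tail F (x / (2 * b))) p.2 +
          (Ioi (x / z)).indicator (fun _ => 1) p.2) := by
  have hfar : 0 ≤ (Ioi (x / z)).indicator (fun _ => (1 : ℝ)) p.2 :=
    indicator_nonneg (fun _ _ => zero_le_one) _
  have hlarge : 0 ≤ (Ioi a).indicator (fun _ => tail F (x / (2 * b))) p.2 :=
    indicator_nonneg (fun _ _ => tail_nonneg _ _) _
  have hone : 0 ≤ η + (Ioi b).indicator (fun _ => 2 * C) p.1 :=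
    add_nonneg hη (indicator_nonneg (fun _ _ => by positivity) _)
  rcases (h1.trans h12).eq_or_lt with h2 | h2
  · rw [preimage_mul_twoBigJumps_eq_empty (mul_pos (hb.trans_le hba) hB).le h2.symm,
      indicator_of_notMem (s := Ioi 0) (notMem_Ioi.2 h2.ge), measureReal_empty, mul_zero, zero_add]
    exact add_nonneg hlarge hfar
  rw [indicator_of_mem (mem_Ioi.2 h2)]
  rcases lt_or_ge (x / z) p.2 with hxz | hxz
  · rw [indicator_of_mem (mem_Ioi.2 hxz)]
    linarith [measureReal_le_one (μ := F.prod F) (s := (p * ·) ⁻¹' twoBigJumps (a * B) x),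
      mul_nonneg hone (tail_nonneg F (x / p.2))]
  · have hzx : p.2 * z ≤ x := (le_div_iff₀ (by linarith)).1 hxz
    have hzp : z ≤ x / p.2 := (le_div_iff₀' h2).2 hzx
    linarith [measureReal_preimage_mul_twoBigJumps_le hb hba hB h1 h12 (by nlinarith)
      (hJ _ hzp) (hshift _ hzp)]

lemma measureReal_prod_mconv_twoBigJumps_le [IsProbabilityMeasure F] [IsFiniteMeasure G]
    (hG : ∀ᵐ y ∂G, 0 ≤ y) {a b B C η x z : ℝ} (hb : 0 < b) (hba : b ≤ a) (hB : 0 < B)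
    (hC : 0 ≤ C) (hη : 0 ≤ η) (hx : 0 ≤ x) (hz : 2 * B ≤ z)
    (hJ : ∀ w ≥ z, (F.prod F).real (twoBigJumps B w) ≤ η * tail F w)
    (hshift : ∀ w ≥ z, tail F (w - B) ≤ C * tail F w) :
    ((G ∗ₘ F).prod (G ∗ₘ F)).real (twoBigJumps (a * B) x) ≤
      2 * ((η * G.real univ + 2 * C * tail G b) * tail (G ∗ₘ F) x +
        G.real univ * (tail G a * tail F (x / (2 * b)) + tail G (x / z))) := by
  set f₁ : ℝ → ℝ := fun y => η + (Ioi b).indicator (fun _ => 2 * C) y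
  set g₁ : ℝ → ℝ := (Ioi 0).indicator fun y => tail F (x / y)
  set g₂ : ℝ → ℝ := fun y => (Ioi a).indicator (fun _ => tail F (x / (2 * b))) y +
    (Ioi (x / z)).indicator (fun _ => 1) y
  have integrable_indicator_const (c d : ℝ) : Integrable ((Ioi d).indicator fun _ => c) G :=
    (integrable_const c).indicator measurableSet_Ioi
  have integral_indicator_const' (c d : ℝ) : ∫ y, (Ioi d).indicator (fun _ => c) y ∂G =
      tail G d * c := integral_indicator_const c measurableSet_Ioi
  have hf₁ : Integrable f₁ G := (integrable_const η).add (integrable_indicator_const _ _)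
  have hg₁ : Integrable g₁ G := (integrable_tail_div x).indicator measurableSet_Ioi
  have hg₂ : Integrable g₂ G :=
    (integrable_indicator_const _ _).add (integrable_indicator_const _ _)
  have hf₁0 (y : ℝ) : 0 ≤ f₁ y := add_nonneg hη (indicator_nonneg (fun _ _ => by positivity) _)
  have hg₁0 (y : ℝ) : 0 ≤ g₁ y := indicator_nonneg (fun _ _ => tail_nonneg _ _) _
  have hg₂0 (y : ℝ) : 0 ≤ g₂ y := add_nonneg (indicator_nonneg (fun _ _ => tail_nonneg _ _) _)
    (indicator_nonneg (fun _ _ => zero_le_one) _)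
  rw [measureReal_mconv_prod_mconv (measurableSet_twoBigJumps _ _)]
  refine (integral_prod_le_two_mul_of_symm (g := fun p => f₁ p.1 * g₁ p.2 + g₂ p.2)
    (Measure.integrable_measure_prodMk_left (measurable_mul (measurableSet_twoBigJumps _ _))
      (measure_ne_top _ _)) ((hf₁.mul_prod hg₁).add (hg₂.comp_snd G))
    (fun p => add_nonneg (mul_nonneg (hf₁0 _) (hg₁0 _)) (hg₂0 _))
    (measureReal_preimage_swap_mul_twoBigJumps _ _) ?_).trans_eq ?_
  · filter_upwards [Measure.quasiMeasurePreserving_fst.ae hG] with p h1 h12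
    exact measureReal_preimage_mul_twoBigJumps_le_of_eventually hb hba hB hC hη hz hJ hshift h1 h12
  · rw [integral_add (hf₁.mul_prod hg₁) (hg₂.comp_snd G), integral_prod_mul, integral_fun_snd,
      integral_add (integrable_const η) (integrable_indicator_const _ _),
      integral_add (integrable_indicator_const _ _) (integrable_indicator_const _ _),
      integral_indicator_const', integral_indicator_const', integral_indicator_const',
      integral_const, integral_indicator measurableSet_Ioi, tail_mconv hG hx]
    simp only [smul_eq_mul]
    ring

lemma NoTwoBigJumps.mconv [IsProbabilityMeasure F] [IsFiniteMeasure G] {γ : ℝ}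
    (hJ : NoTwoBigJumps F) (hF : MemClassL F γ)
    (hG : ∀ᵐ y ∂G, 0 ≤ y) (hneg : ScaledTailNegligible G (G ∗ₘ F)) : NoTwoBigJumps (G ∗ₘ F) := by
  set g := G.real univ
  have : 0 ≤ g := measureReal_nonneg
  suffices hδ_bound : ∀ δ > 0, ∀ᶠ A in atTop, ∀ᶠ x in atTop,
      ((G ∗ₘ F).prod (G ∗ₘ F)).real (twoBigJumps A x) ≤ (6 * g + 2) * δ * tail (G ∗ₘ F) x by
    intro ε hε
    have := hδ_bound (ε / (6 * g + 2)) (by positivity)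
    rwa [mul_div_cancel₀ ε (by positivity)] at this
  intro δ hδ
  obtain ⟨B, hB, hJB⟩ := ((eventually_gt_atTop 0).and (hJ δ hδ)).exists
  set C := Real.exp (γ * B) + 1
  have hC : 0 < C := by positivity
  obtain ⟨z, hz⟩ := eventually_atTop.1 <| hJB.and <|
    (hF.eventually_tail_sub_le (lt_add_one (Real.exp (γ * B)))).and (eventually_ge_atTop (2 * B))
  have hzB : 2 * B ≤ z := (hz z le_rfl).2.2
  obtain ⟨b, hb, hGb⟩ : ∃ b, 0 < b ∧ tail G b ≤ δ / (2 * C) :=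
    ((eventually_gt_atTop 0).and
      ((tendsto_tail_atTop G).eventually (ge_mem_nhds (by positivity)))).exists
  obtain ⟨a, hba, hGa⟩ : ∃ a ≥ 2 * b, tail G a ≤ δ * tail G (2 * b) :=
    exists_tail_le_mul_tail G hδ (2 * b)
  filter_upwards [eventually_ge_atTop (a * B)] with A hA
  filter_upwards [eventually_ge_atTop 0, (hneg z⁻¹ (inv_pos.2 (by linarith))).def hδ] with x hx hGz
  set W := tail (G ∗ₘ F) x
  have hW : 0 ≤ W := tail_nonneg _ _
  rw [Real.norm_of_nonneg (tail_nonneg _ _), Real.norm_of_nonneg hW, inv_mul_eq_div] at hGz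
  have hlarge : tail G a * tail F (x / (2 * b)) ≤ δ * W := by
    grw [hGa, mul_assoc, tail_mul_tail_le_tail_mconv (by positivity) hx]
    exact tail_nonneg _ _
  calc ((G ∗ₘ F).prod (G ∗ₘ F)).real (twoBigJumps A x)
      ≤ ((G ∗ₘ F).prod (G ∗ₘ F)).real (twoBigJumps (a * B) x) :=
        measureReal_mono (twoBigJumps_anti_left hA x)
    _ ≤ 2 * ((δ * g + 2 * C * tail G b) * W +
          g * (tail G a * tail F (x / (2 * b)) + tail G (x / z))) :=
        measureReal_prod_mconv_twoBigJumps_le hG hb (by linarith) hB hC.le hδ.le hx hzB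
          (fun w hw => (hz w hw).1) fun w hw => (hz w hw).2.1
    _ ≤ 2 * ((δ * g + 2 * C * (δ / (2 * C))) * W + g * (δ * W + δ * W)) := by gcongr
    _ = (6 * g + 2) * δ * W := by field_simp; ring

end ProductNoTwoBigJumps

section RightEndpoint

lemma isInvRightEndpoint_zero_of_not_bddAbove {G : Measure ℝ}
    (hG : ¬ BddAbove {y | 0 < tail G y}) : IsInvRightEndpoint G 0 := by
  refine ⟨fun r hr => hr.1.le, fun s hs => le_of_forall_gt fun r hr => ?_⟩
  obtain ⟨y, hy, hry⟩ := not_bddAbove_iff.1 hG r⁻¹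
  have hy0 : 0 < y := (inv_pos.2 hr).trans hry
  exact (hs ⟨inv_pos.2 hy0, by rwa [inv_inv]⟩).trans_lt (inv_lt_of_inv_lt₀ hr hry)

lemma isInvRightEndpoint_inv_of_isLUB {G : Measure ℝ} {β : ℝ} (hβ : IsLUB {y | 0 < tail G y} β)
    (hβ0 : 0 < β) : IsInvRightEndpoint G β⁻¹ := by
  refine ⟨fun r hr => inv_le_of_inv_le₀ hr.1 (hβ.1 hr.2), fun s hs => ?_⟩
  refine le_of_forall_gt fun r hr => ?_
  have hr0 : 0 < r := (inv_pos.2 hβ0).trans hr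
  obtain ⟨y, hy, hry⟩ := (lt_isLUB_iff hβ).1 (inv_lt_of_inv_lt₀ hβ0 hr)
  have hy0 : 0 < y := (inv_pos.2 hr0).trans hry
  exact (hs ⟨inv_pos.2 hy0, by rwa [inv_inv]⟩).trans_lt (inv_lt_of_inv_lt₀ hr0 hry)

lemma tail_zero_pos_of_ae_nonneg {G : Measure ℝ} [IsFiniteMeasure G] (hG : ∀ᵐ y ∂G, 0 ≤ y)
    (hG0 : ¬ ∀ᵐ y ∂G, y = 0) : 0 < tail G 0 := by
  refine (tail_nonneg G 0).lt_of_ne' fun h => hG0 ?_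
  rw [tail, measureReal_eq_zero_iff] at h
  filter_upwards [hG, measure_eq_zero_iff_ae_notMem.1 h] with y hy hy'
  exact le_antisymm (not_lt.1 hy') hy

lemma exists_isInvRightEndpoint_gammaOverBeta {Ω : Type*} [MeasureSpace Ω]
    [IsFiniteMeasure (ℙ : Measure Ω)] {Y : Ω → ℝ} (hY : Measurable Y)
    (hY0 : 0 < tail (Measure.map Y ℙ) 0) (γ : ℝ) :
    ∃ q, IsInvRightEndpoint (Measure.map Y ℙ) q ∧ gammaOverBeta Y γ = γ * q := by
  rw [gammaOverBeta, rvTail_eq_tail_map hY]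
  split_ifs with hbdd
  · obtain ⟨y, hy, hYy⟩ := exists_gt_tail_pos _ hY0
    exact ⟨_, isInvRightEndpoint_inv_of_isLUB (isLUB_csSup ⟨0, hY0⟩ hbdd)
      (hy.trans_le (le_csSup hbdd hYy)), div_eq_mul_inv _ _⟩
  · exact ⟨0, isInvRightEndpoint_zero_of_not_bddAbove hbdd, (mul_zero γ).symm⟩

end RightEndpoint

section Disintegration

lemma frequently_measure_singleton_sub_eq_zero (G : Measure ℝ) [SFinite G] (y : ℝ) :
    ∃ᶠ δ in 𝓝[>] 0, G {y - δ} = 0 := by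
  have hcountable : {z | 0 < G {z}}.Countable :=
    Measure.countable_meas_pos_of_disjoint_iUnion measurableSet_singleton
      fun _ _ h => disjoint_singleton.2 h
  refine (frequently_nhdsGT_mem_of_dense
    ((hcountable.preimage (sub_right_injective (b := y))).dense_compl ℝ) 0).mono fun δ hδ => ?_
  simpa using hδ

lemma ae_eq_rnDeriv_of_tendsto_measureReal_Ioc_div {ρ G : Measure ℝ} [IsFiniteMeasure ρ]
    [IsFiniteMeasure G] (hρ : ρ ≪ G) :
    ∀ᵐ y ∂G, ∀ L, Tendsto (fun δ => ρ.real (Ioc (y - δ) (y + δ)) / G.real (Ioc (y - δ) (y + δ)))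
      (𝓝[>] 0) (𝓝 L) → L = (ρ.rnDeriv G y).toReal := by
  filter_upwards [Besicovitch.ae_tendsto_rnDeriv ρ G, ρ.rnDeriv_lt_top G] with y hy hlt L hL
  refine tendsto_nhds_unique_of_frequently_eq hL ((ENNReal.tendsto_toReal hlt.ne).comp hy)
    (((frequently_measure_singleton_sub_eq_zero G y).and_eventually self_mem_nhdsWithin).mono ?_)
  intro δ ⟨hnull, hδ⟩
  have measure_closedBall {m : Measure ℝ} (hm : m {y - δ} = 0) :
      m (Metric.closedBall y δ) = m (Ioc (y - δ) (y + δ)) := by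
    rw [Real.closedBall_eq_Icc, ← Ioc_insert_left (by linarith [show 0 < δ from hδ]),
      insert_eq, measure_congr (union_ae_eq_right_of_ae_eq_empty (ae_eq_empty.2 hm))]
  rw [Function.comp_apply, ENNReal.toReal_div, measure_closedBall hnull,
    measure_closedBall (hρ hnull)]
  rfl

lemma mul_tail_le_mul_tail_of_dense {μ ν : Measure ℝ} [IsFiniteMeasure μ] [IsFiniteMeasure ν]
    {s : Set ℝ} (hs : Dense s) {a b z : ℝ} (h : ∀ x ∈ s, z < x → a * tail μ x ≤ b * tail ν x) :
    a * tail μ z ≤ b * tail ν z :=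
  le_of_tendsto_of_tendsto_of_frequently ((tendsto_tail_nhdsGT μ z).const_mul a)
    ((tendsto_tail_nhdsGT ν z).const_mul b)
    (((frequently_nhdsGT_mem_of_dense hs z).and_eventually self_mem_nhdsWithin).mono
      fun x hx => h x hx.1 hx.2)

/-- The relation `κ y (z, ∞) ~ h y * F (z, ∞)` as `z → ∞`, uniformly in `G`-almost every `y`. -/
def UniformTailEquiv (G F : Measure ℝ) (κ : Kernel ℝ ℝ) (h : ℝ → ℝ) : Prop :=
  ∀ c > 1, ∃ z₀ > 0, ∀ᵐ y ∂G, ∀ z ≥ z₀,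
    tail (κ y) z ≤ c * (h y * tail F z) ∧ h y * tail F z ≤ c * tail (κ y) z

lemma le_mul_and_le_mul_of_abs_div_sub_one_lt {a b c : ℝ} (hc : 1 < c) (hb : 0 < b)
    (h : |a / b - 1| < 1 - c⁻¹) : a ≤ c * b ∧ b ≤ c * a := by
  have hc0 : 0 < c := by linarith
  obtain ⟨hlo, hhi⟩ := abs_lt.1 h
  have hbc : c⁻¹ < a / b := by linarith
  have hac : a / b < c := by nlinarith [mul_inv_cancel₀ hc0.ne', inv_pos.2 hc0]
  exact ⟨((div_lt_iff₀ hb).1 hac).le, (inv_mul_le_iff₀ hc0).1 ((lt_div_iff₀ hb).1 hbc).le⟩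

section Assumption1

variable {Ω : Type*} [MeasureSpace Ω] {X Y : Ω → ℝ} {h : ℝ → ℝ} {K : ℝ → ℝ → ℝ}

lemma ae_mem_distSupport (hY : Measurable Y) : ∀ᵐ y ∂Measure.map Y ℙ, y ∈ distSupport Y := by
  filter_upwards [Measure.support_mem_ae] with y hy δ hδ
  have hpos := (Measure.mem_support_iff_forall y).1 hy (Ioo (y - δ) (y + δ))
    (Ioo_mem_nhds (by linarith) (by linarith))
  rwa [Measure.map_apply hY measurableSet_Ioo] at hpos

variable [IsFiniteMeasure (ℙ : Measure Ω)]

lemma withDensity_condDistrib_apply (hX : Measurable X) (hY : Measurable Y) {s t : Set ℝ}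
    (hs : MeasurableSet s) (ht : MeasurableSet t) :
    (Measure.map Y ℙ).withDensity (fun y => condDistrib X Y ℙ y s) t =
      ℙ {ω | X ω ∈ s ∧ Y ω ∈ t} := by
  rw [withDensity_apply _ ht, ← Measure.compProd_apply_prod ht hs,
    compProd_map_condDistrib hX.aemeasurable, Measure.map_apply (hY.prodMk hX) (ht.prod hs)]
  exact congrArg ℙ (ext fun ω => and_comm)

lemma Assumption1.ae_eq_tail_condDistrib (hA1 : Assumption1 X Y h K) (hX : Measurable X)
    (hY : Measurable Y) (x : ℝ) :
    ∀ᵐ y ∂Measure.map Y ℙ, K x y = tail (condDistrib X Y ℙ y) x := by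
  set G := Measure.map Y (ℙ : Measure Ω)
  set ρ := G.withDensity fun y => condDistrib X Y ℙ y (Ioi x)
  have hρ : IsFiniteMeasure ρ := ⟨by
    rw [withDensity_condDistrib_apply hX hY measurableSet_Ioi .univ]; exact measure_lt_top _ _⟩
  have hρG : ρ ≪ G := withDensity_absolutelyContinuous _ _
  have hκ : Measurable fun y => condDistrib X Y ℙ y (Ioi x) :=
    Kernel.measurable_coe _ measurableSet_Ioi
  filter_upwards [ae_eq_rnDeriv_of_tendsto_measureReal_Ioc_div hρG,
    Measure.rnDeriv_withDensity G hκ, ae_mem_distSupport hY] with y hlim hderiv hy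
  rw [tail, measureReal_def, ← hderiv]
  refine hlim _ ((hA1.2.2.2.1 y hy x).congr fun δ => ?_)
  rw [measureReal_def, withDensity_condDistrib_apply hX hY measurableSet_Ioi measurableSet_Ioc,
    map_measureReal_apply hY measurableSet_Ioc]
  rfl

lemma Assumption1.uniformTailEquiv (hA1 : Assumption1 X Y h K) (hX : Measurable X)
    (hY : Measurable Y) (hY0 : ∀ᵐ y ∂Measure.map Y ℙ, 0 ≤ y) (hF : UnboundedDist X) :
    UniformTailEquiv (Measure.map Y ℙ) (Measure.map X ℙ) (condDistrib X Y ℙ) h := by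
  intro c hc
  obtain ⟨z₀, hz₀⟩ := eventually_atTop.1
    (hA1.2.2.2.2 (1 - c⁻¹) (sub_pos.2 (inv_lt_one_of_one_lt₀ hc)))
  refine ⟨max z₀ 1, by positivity, ?_⟩
  have hrat : ∀ᵐ y ∂Measure.map Y ℙ, ∀ x ∈ range ((↑) : ℚ → ℝ),
      K x y = tail (condDistrib X Y ℙ y) x :=
    (ae_ball_iff (countable_range _)).2 fun x _ => hA1.ae_eq_tail_condDistrib hX hY x
  filter_upwards [hY0, hrat] with y hy hK z hz
  have hle (x : ℝ) (hx : x ∈ range ((↑) : ℚ → ℝ)) (hzx : z < x) :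
      tail (condDistrib X Y ℙ y) x ≤ c * (h y * tail (Measure.map X ℙ) x) ∧
        h y * tail (Measure.map X ℙ) x ≤ c * tail (condDistrib X Y ℙ y) x := by
    obtain ⟨hz₀z, h1z⟩ := max_le_iff.1 hz
    rw [← hK x hx, ← rvTail_eq_tail_map hX]
    exact le_mul_and_le_mul_of_abs_div_sub_one_lt hc
      (mul_pos (hA1.2.1 y hy) (hF x (by linarith))) (hz₀ x (by linarith) y hy)
  constructor
  · simpa only [one_mul, mul_assoc] using mul_tail_le_mul_tail_of_dense (a := 1) (b := c * h y)
      Rat.denseRange_cast fun x hx hzx => by simpa only [one_mul, mul_assoc] using (hle x hx hzx).1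
  · exact mul_tail_le_mul_tail_of_dense Rat.denseRange_cast fun x hx hzx => (hle x hx hzx).2

lemma map_mul_eq_mulLaw_condDistrib (hX : Measurable X) (hY : Measurable Y) :
    Measure.map (fun ω => X ω * Y ω) ℙ = mulLaw (Measure.map Y ℙ) (condDistrib X Y ℙ) := by
  rw [mulLaw, compProd_map_condDistrib hX.aemeasurable,
    Measure.map_map (by fun_prop) (hY.prodMk hX)]
  exact congrArg (Measure.map · ℙ) (funext fun ω => mul_comm _ _)

end Assumption1

end Disintegration

section Reweighting

/-- The measure with density `h` with respect to `G`, for a nonnegative weight `h`. -/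
def reweight (G : Measure ℝ) (h : ℝ → ℝ) : Measure ℝ := G.withDensity fun y => ENNReal.ofReal (h y)

variable {F G G' H H' : Measure ℝ} {h : ℝ → ℝ} {C q : ℝ}

lemma reweight_absolutelyContinuous : reweight G h ≪ G := withDensity_absolutelyContinuous _ _

lemma absolutelyContinuous_reweight (hm : Measurable h) (hpos : ∀ᵐ y ∂G, 0 < h y) :
    G ≪ reweight G h :=
  withDensity_absolutelyContinuous' hm.ennreal_ofReal.aemeasurable
    (hpos.mono fun _ hy => (ENNReal.ofReal_pos.2 hy).ne')

lemma reweight_le_smul (hC : ∀ᵐ y ∂G, h y ≤ C) : reweight G h ≤ ENNReal.ofReal C • G := by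
  rw [← withDensity_const]
  exact withDensity_mono (hC.mono fun _ hy => ENNReal.ofReal_le_ofReal hy)

lemma isFiniteMeasure_reweight [IsFiniteMeasure G] (hC : ∀ᵐ y ∂G, h y ≤ C) :
    IsFiniteMeasure (reweight G h) :=
  have := G.smul_finite (c := ENNReal.ofReal C) ENNReal.ofReal_ne_top
  isFiniteMeasure_of_le _ (reweight_le_smul hC)

lemma tail_reweight_le [IsFiniteMeasure G] (hC0 : 0 ≤ C) (hC : ∀ᵐ y ∂G, h y ≤ C) (x : ℝ) :
    tail (reweight G h) x ≤ C * tail G x := by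
  have hle := ENNReal.toReal_mono
    (ENNReal.mul_ne_top ENNReal.ofReal_ne_top (measure_ne_top G (Ioi x)))
    (reweight_le_smul hC (Ioi x))
  rwa [ENNReal.toReal_mul, ENNReal.toReal_ofReal hC0] at hle

lemma tail_reweight_mconv [IsProbabilityMeasure F]
    [IsFiniteMeasure (reweight G h)] (hm : Measurable h) (hpos : ∀ᵐ y ∂G, 0 ≤ h y)
    (hG : ∀ᵐ y ∂G, 0 ≤ y) {x : ℝ} (hx : 0 ≤ x) :
    tail (reweight G h ∗ₘ F) x = ∫ y in Ioi 0, h y * tail F (x / y) ∂G := by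
  rw [tail_mconv (reweight_absolutelyContinuous.ae_le hG) hx, reweight,
    setIntegral_withDensity_eq_setIntegral_toReal_smul hm.ennreal_ofReal
      (.of_forall fun _ => ENNReal.ofReal_lt_top) _ measurableSet_Ioi]
  refine setIntegral_congr_ae measurableSet_Ioi (hpos.mono fun y hy _ => ?_)
  simp only [ENNReal.toReal_ofReal hy, smul_eq_mul]

lemma IsInvRightEndpoint.congr [IsFiniteMeasure G] [IsFiniteMeasure G']
    (hq : IsInvRightEndpoint G q) (hGG' : G ≪ G') (hG'G : G' ≪ G) : IsInvRightEndpoint G' q := by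
  have tail_pos_iff (y : ℝ) : 0 < tail G y ↔ 0 < tail G' y := by
    rw [tail, tail, measureReal_nonneg.lt_iff_ne', measureReal_nonneg.lt_iff_ne', ne_eq, ne_eq,
      measureReal_eq_zero_iff, measureReal_eq_zero_iff]
    exact not_congr ⟨fun h => hG'G h, fun h => hGG' h⟩
  simpa only [IsInvRightEndpoint, tail_pos_iff] using hq

lemma ScaledTailNegligible.congr (hneg : ScaledTailNegligible G H)
    (hG : ∀ x, tail G' x ≤ C * tail G x) (hH : tail H =O[atTop] tail H') :
    ScaledTailNegligible G' H' := fun b hb =>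
  (IsBigO.of_bound C (.of_forall fun x => by
    rw [Real.norm_of_nonneg (tail_nonneg _ _), Real.norm_of_nonneg (tail_nonneg _ _)]
    exact hG (b * x))).trans_isLittleO ((hneg b hb).trans_isBigO hH)

end Reweighting

section Comparison

variable {F G : Measure ℝ} {κ : Kernel ℝ ℝ} {h : ℝ → ℝ} {C γ q : ℝ}

instance isFiniteMeasure_mulLaw [IsFiniteMeasure G] [IsFiniteKernel κ] :
    IsFiniteMeasure (mulLaw G κ) :=
  inferInstanceAs (IsFiniteMeasure ((G ⊗ₘ κ).map _))

variable [IsMarkovKernel κ]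

lemma UniformTailEquiv.exists_ae_le (hκ : UniformTailEquiv G F κ h) (hF : ∀ x, 0 < tail F x) :
    ∃ C ≥ 0, ∀ᵐ y ∂G, h y ≤ C := by
  obtain ⟨z, -, hz⟩ := hκ 2 one_lt_two
  refine ⟨2 / tail F z, div_nonneg zero_le_two (hF z).le, hz.mono fun y hy => ?_⟩
  rw [le_div_iff₀ (hF z)]
  linarith [(hy z le_rfl).2, tail_le_one (κ y) z]

variable [IsProbabilityMeasure F] [IsFiniteMeasure G]

lemma integrable_mul_tail_div (hm : Measurable h) (hpos : ∀ᵐ y ∂G, 0 ≤ h y)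
    (hC : ∀ᵐ y ∂G, h y ≤ C) (x : ℝ) : Integrable (fun y => h y * tail F (x / y)) G := by
  refine (integrable_tail_div x).bdd_mul (c := C) hm.aestronglyMeasurable ?_
  filter_upwards [hpos, hC] with y h0 h1
  rwa [Real.norm_of_nonneg h0]

lemma UniformTailEquiv.isEquivalent_tail_mulLaw (hκ : UniformTailEquiv G F κ h)
    (hm : Measurable h) (hpos : ∀ᵐ y ∂G, 0 ≤ h y) (hC0 : 0 ≤ C) (hC : ∀ᵐ y ∂G, h y ≤ C)
    (hG : ∀ᵐ y ∂G, 0 ≤ y) (hneg : ScaledTailNegligible G (mulLaw G κ)) :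
    tail (reweight G h ∗ₘ F) ~[atTop] tail (mulLaw G κ) := by
  have := isFiniteMeasure_reweight hC
  refine (isEquivalent_iff_eventually_le_mul (tail_nonneg _) (tail_nonneg _)).2 fun c hc => ?_
  obtain ⟨d, hd, hdc⟩ := exists_between hc
  obtain ⟨z₀, hz₀, hle⟩ := hκ d hd
  have hW (x : ℝ) : IntegrableOn (fun y => h y * tail F (x / y)) (Ioi 0) G :=
    (integrable_mul_tail_div hm hpos hC x).integrableOn
  have hH (x : ℝ) : IntegrableOn (fun y => tail (κ y) (x / y)) (Ioi 0) G :=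
    (integrable_tail_kernel_div x).integrableOn
  have hd0 : 0 < d := by linarith
  have hbdd : ∀ᵐ y ∂G, ∀ x, h y * tail F (x / y) ≤ C := by
    filter_upwards [hpos, hC] with y hy hyC x
    exact (mul_le_of_le_one_right hy (tail_le_one F _)).trans hyC
  constructor
  · filter_upwards [eventually_ge_atTop 0, hneg.eventually_setIntegral_le_add le_rfl hz₀ hC0
      (sub_pos.2 hdc) hW (fun x => (hH x).const_mul d)
      (fun x => .of_forall fun y => mul_nonneg hd0.le (tail_nonneg _ _))
      (fun x => hbdd.mono fun _ hy => hy x)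
      (hle.mono fun y hy _ x hx => (hy _ hx).2)] with x hx hint
    rw [integral_const_mul, ← tail_reweight_mconv hm hpos hG hx, ← tail_mulLaw hG hx] at hint
    linarith
  · filter_upwards [eventually_ge_atTop 0, hneg.eventually_setIntegral_le_add le_rfl hz₀ zero_le_one
      (sub_pos.2 ((div_lt_one (by linarith)).2 hdc)) hH (fun x => (hW x).const_mul d)
      (fun x => hpos.mono fun y hy => mul_nonneg hd0.le (mul_nonneg hy (tail_nonneg _ _)))
      (fun x => .of_forall fun y => tail_le_one _ _)
      (hle.mono fun y hy _ x hx => (hy _ hx).1)] with x hx hint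
    rw [integral_const_mul, ← tail_reweight_mconv hm hpos hG hx, ← tail_mulLaw hG hx] at hint
    refine le_of_mul_le_mul_left ?_ (show 0 < d / c by positivity)
    calc d / c * tail (mulLaw G κ) x ≤ d * tail (reweight G h ∗ₘ F) x := by linarith
      _ = d / c * (c * tail (reweight G h ∗ₘ F) x) := by field_simp

theorem UniformTailEquiv.memClassL_and_noTwoBigJumps_mulLaw (hκ : UniformTailEquiv G F κ h)
    (hm : Measurable h) (hpos : ∀ᵐ y ∂G, 0 < h y) (hF : MemClassL F γ) (hγ : 0 ≤ γ)
    (hJ : NoTwoBigJumps F) (hq : IsInvRightEndpoint G q) (hG : ∀ᵐ y ∂G, 0 ≤ y)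
    (hneg : ScaledTailNegligible G (mulLaw G κ)) :
    MemClassL (mulLaw G κ) (γ * q) ∧ NoTwoBigJumps (mulLaw G κ) := by
  obtain ⟨C, hC0, hC⟩ := hκ.exists_ae_le hF.tail_pos
  have := isFiniteMeasure_reweight hC
  have hequiv : tail (mulLaw G κ) ~[atTop] tail (reweight G h ∗ₘ F) :=
    (hκ.isEquivalent_tail_mulLaw hm (hpos.mono fun _ => le_of_lt) hC0 hC hG hneg).symm
  have hG' : ∀ᵐ y ∂reweight G h, 0 ≤ y := reweight_absolutelyContinuous.ae_le hG
  have hneg' : ScaledTailNegligible (reweight G h) (reweight G h ∗ₘ F) :=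
    hneg.congr (tail_reweight_le hC0 hC) hequiv.isBigO
  have hq' : IsInvRightEndpoint (reweight G h) q :=
    hq.congr (absolutelyContinuous_reweight hm hpos) reweight_absolutelyContinuous
  exact ⟨(hF.mconv hγ hq' hG' hneg').congr hequiv,
    (hJ.mconv hF hG' hneg').congr hequiv.isTheta⟩

end Comparison

theorem product_memS_of_assumption1 {Ω : Type*} [MeasureSpace Ω] [IsProbabilityMeasure (ℙ : Measure Ω)]
    (X Y : Ω → ℝ) (hXm : Measurable X) (hYm : Measurable Y)
    (hYnonneg : ∀ ω, 0 ≤ Y ω)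
    (hFunb : UnboundedDist X)
    (hXnd : ℙ {ω | X ω = 0} ≠ 1) (hYnd : ℙ {ω | Y ω = 0} ≠ 1)
    (h : ℝ → ℝ) (K : ℝ → ℝ → ℝ) (hA1 : Assumption1 X Y h K) (hA2 : Assumption2 X Y)
    (γ : ℝ) (hγ : 0 ≤ γ) (hFS : MemSGamma X γ) :
    MemSGamma (fun ω => X ω * Y ω) (gammaOverBeta Y γ) := by
  set G := Measure.map Y (ℙ : Measure Ω)
  set F := Measure.map X (ℙ : Measure Ω)
  have : IsProbabilityMeasure G := Measure.isProbabilityMeasure_map hYm.aemeasurable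
  have : IsProbabilityMeasure F := Measure.isProbabilityMeasure_map hXm.aemeasurable
  have hXYm : Measurable fun ω => X ω * Y ω := hXm.mul hYm
  have hG : ∀ᵐ y ∂G, 0 ≤ y :=
    (ae_map_iff hYm.aemeasurable measurableSet_Ici).2 (.of_forall hYnonneg)
  have hG0 : ¬ ∀ᵐ y ∂G, y = 0 := fun h0 => hYnd <|
    (mem_ae_iff_prob_eq_one (hYm (measurableSet_singleton 0))).1 (ae_of_ae_map hYm.aemeasurable h0)
  obtain ⟨q, hq, hγq⟩ :=
    exists_isInvRightEndpoint_gammaOverBeta hYm (tail_zero_pos_of_ae_nonneg hG hG0) γ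
  have hneg : ScaledTailNegligible G (mulLaw G (condDistrib X Y ℙ)) := by
    rwa [Assumption2, rvTail_eq_tail_map hYm, rvTail_eq_tail_map hXYm,
      map_mul_eq_mulLaw_condDistrib hXm hYm] at hA2
  obtain ⟨hFL, hFJ⟩ := (memSGamma_iff_noTwoBigJumps hXm hγ).1 hFS
  rw [hγq, memSGamma_iff_noTwoBigJumps hXYm (mul_nonneg hγ hq.nonneg),
    map_mul_eq_mulLaw_condDistrib hXm hYm]
  exact (hA1.uniformTailEquiv hXm hYm hG hFunb).memClassL_and_noTwoBigJumps_mulLaw hA1.1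
    (hG.mono hA1.2.1) hFL hγ hFJ hq hG hneg
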